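/- Let s > 7/2. There is a constant C = C(s) > 0 such that for all ε ∈ (0,1) and all θ ∈ H^s(𝕋): |(T̃_ε((𝓗θ) ∂_x θ), T̃_ε θ)_{H^s}| ≤ C (‖∂_x θ‖_{L^∞} + ‖𝓗∂_x θ‖_{L^∞}) ‖θ‖²_{H^s}. -/

import Mathlib

noncomputable section
open scoped BigOperators

/-- A (complex-valued) function on the torus `𝕋 = ℝ/2πℤ`, represented by its sequence of
Fourier coefficients `f̂ : ℤ → ℂ`. -/
abbrev FC := ℤ → ℂ

namespace FC

/-- The Sobolev weight `(1+k²)^s`. -/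
def wt (s : ℝ) (k : ℤ) : ℝ := (1 + (k : ℝ) ^ 2) ^ s

/-- `c` represents a function belonging to the Sobolev space `H^s(𝕋)`. -/
def memHs (s : ℝ) (c : FC) : Prop := Summable fun k : ℤ => wt s k * ‖c k‖ ^ 2

/-- The `H^s(𝕋)` norm: `‖f‖²_{H^s} = Σ_{k∈ℤ} (1+k²)^s |f̂(k)|²`. -/
def hsNorm (s : ℝ) (c : FC) : ℝ := Real.sqrt (∑' k : ℤ, wt s k * ‖c k‖ ^ 2)

/-- The `H^s(𝕋)` inner product `(f,g)_{H^s} = Σ_{k∈ℤ} (1+k²)^s f̂(k) conj(ĝ(k))`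
(its real part; the sum is real for real-valued functions). -/
def hsInner (s : ℝ) (c d : FC) : ℝ :=
  (∑' k : ℤ, ((wt s k : ℂ) * (c k * starRingEnd ℂ (d k)))).re

/-- `c` represents a real-valued function (conjugate-symmetric coefficients). -/
def isReal (c : FC) : Prop := ∀ k : ℤ, c (-k) = starRingEnd ℂ (c k)

/-- The derivative `∂ₓ`, i.e. the Fourier multiplier `ik`. -/
def D1 (c : FC) : FC := fun k => Complex.I * (k : ℂ) * c k

/-- The pointwise product of functions, i.e. convolution of Fourier coefficients. -/
def mul (c d : FC) : FC := fun k => ∑' j : ℤ, c j * d (k - j)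

/-- The represented function, evaluated at `x ∈ ℝ`. -/
def eval (c : FC) (x : ℝ) : ℂ := ∑' k : ℤ, c k * Complex.exp (Complex.I * (k : ℂ) * (x : ℂ))

/-- The `L^∞` norm (supremum of the represented periodic function over ℝ). -/
def linfty (c : FC) : ℝ := ⨆ x : ℝ, ‖eval c x‖

/-- The `W^{1,∞}` norm. -/
def w1infty (c : FC) : ℝ := linfty c + linfty (D1 c)

/-- A Fourier multiplier operator with real symbol `m`. -/
def mult (m : ℤ → ℝ) (c : FC) : FC := fun k => (m k : ℂ) * c k

/-- The operator `(1-∂ₓ²)⁻¹`, i.e. the Fourier multiplier `(1+k²)⁻¹`. -/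
def helmInv : FC → FC := mult fun k => (1 + (k : ℝ) ^ 2)⁻¹

/-- The operator `1-∂ₓ²`, i.e. the Fourier multiplier `1+k²`. -/
def helm : FC → FC := mult fun k => 1 + (k : ℝ) ^ 2

/-- The operator `T̃_ε = (1-ε²∂ₓ²)⁻¹`, i.e. the Fourier multiplier `(1+ε²k²)⁻¹`. -/
def T (ε : ℝ) : FC → FC := mult fun k => (1 + ε ^ 2 * (k : ℝ) ^ 2)⁻¹

/-- The periodic Hilbert transform, i.e. the Fourier multiplier `-i·sgn(k)`. -/
def hilbert (c : FC) : FC := fun k => -Complex.I * (Int.sign k : ℂ) * c k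

/-- The Friedrichs-type mollifier `J_ε`, the Fourier multiplier `ĵ(εk)`. -/
def Jmol (jhat : ℝ → ℝ) (ε : ℝ) : FC → FC := mult fun k => jhat (ε * (k : ℝ))

/-- The generalized Lie derivative `𝓛_ξ f = ξ ∂ₓ f + (∂ₓ ξ) f`. -/
def lie (ξ c : FC) : FC := mul ξ (D1 c) + mul (D1 ξ) c

/-- `𝓛²_ξ f = 𝓛_ξ (𝓛_ξ f)`. -/
def lie2 (ξ c : FC) : FC := lie ξ (lie ξ c)

/-- The coefficientwise sum `Σ_{k∈ℕ} F k` of a sequence of functions. -/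
def tsumFC (F : ℕ → FC) : FC := fun m => ∑' k : ℕ, F k m

/-- The norm on the product space `H^{s₁}×H^{s₂}`. -/
def pairNorm (s₁ s₂ : ℝ) (c d : FC) : ℝ := Real.sqrt (hsNorm s₁ c ^ 2 + hsNorm s₂ d ^ 2)

/-- The inner product on the product space `H^{s₁}×H^{s₂}`:
`((c₁,d₁),(c₂,d₂)) ↦ (c₁,c₂)_{H^{s₁}} + (d₁,d₂)_{H^{s₂}}`. -/
def pairInner (s₁ s₂ : ℝ) (c₁ d₁ c₂ d₂ : FC) : ℝ := hsInner s₁ c₁ c₂ + hsInner s₂ d₁ d₂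

end FC

/-!
On the Fourier side the form is a sum over pairs of frequencies. As `θ` is real, it reduces to the
triads `0 < a < n` of frequencies `a`, `n - a`, `-n`, plus the zero-frequency terms, which are
estimated directly. The coefficients `(n - a) θ̂ (n - a)` form the Toeplitz matrix of the
positive-frequency part of `-i ∂ₓθ`, so its norm on `ℓ²` is at most
`(‖∂ₓθ‖_∞ + ‖𝓗 ∂ₓθ‖_∞) / 2`. It remains to see that the kernel multiplying this matrix is a Schur
multiplier, uniformly in `ε`. The exchange of `a` and `n - a` leaves the triad unchanged, so the
fraction `a / n` in the leading term may be replaced by `η (a / n)` for any `η` with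
`η x + η (1 - x) = 1`. For a polynomial `η` vanishing to high order at `0` the new kernel is built
from quotients `u a / v n` with `0 ≤ u a ≤ v n` and from Loewner matrices of fractional powers;
both are Gram matrices of uniformly bounded families of vectors in `L²`.
-/

open MeasureTheory Filter

/-! ### Bilinear forms and Schur multipliers -/

section SchurMultipliers

variable {ι α β : Type*}

/-- The bilinear form with matrix `B` has norm at most `M` on `ℓ²`. The condition
`‖⟪h, B f⟫‖ ≤ M ‖f‖ ‖h‖` is encoded, for finitely supported vectors, in the equivalent form with the
arithmetic mean of `‖f‖ ^ 2` and `‖h‖ ^ 2` on the right. -/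
structure IsFormBounded (B : α → β → ℂ) (M : ℝ) : Prop where
  nonneg : 0 ≤ M
  bound : ∀ (S : Finset α) (T : Finset β) (f : β → ℂ) (h : α → ℂ),
    ‖∑ n ∈ S, ∑ a ∈ T, B n a * f a * h n‖ ≤
      M / 2 * (∑ a ∈ T, ‖f a‖ ^ 2 + ∑ n ∈ S, ‖h n‖ ^ 2)

namespace IsFormBounded

variable {B B' : α → β → ℂ} {M M' : ℝ}

theorem add (hB : IsFormBounded B M) (hB' : IsFormBounded B' M') :
    IsFormBounded (fun n a => B n a + B' n a) (M + M') where
  nonneg := add_nonneg hB.nonneg hB'.nonneg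
  bound S T f h := by
    simp only [add_mul, Finset.sum_add_distrib, add_div]
    exact (norm_add_le _ _).trans (add_le_add (hB.bound S T f h) (hB'.bound S T f h))

theorem mul_row (hB : IsFormBounded B M) {φ : α → ℝ} {D : ℝ} (hφ : ∀ n, |φ n| ≤ D) :
    IsFormBounded (fun n a => φ n * B n a) ((1 + D ^ 2) * M) where
  nonneg := mul_nonneg (by positivity) hB.nonneg
  bound S T f h := by
    have hsq : ∑ n ∈ S, ‖(φ n : ℂ) * h n‖ ^ 2 ≤ D ^ 2 * ∑ n ∈ S, ‖h n‖ ^ 2 := by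
      rw [Finset.mul_sum]
      refine Finset.sum_le_sum fun n _ => ?_
      rw [norm_mul, mul_pow, Complex.norm_real, Real.norm_eq_abs]
      gcongr
      exact hφ n
    have hF : 0 ≤ ∑ a ∈ T, ‖f a‖ ^ 2 := by positivity
    have hH : 0 ≤ ∑ n ∈ S, ‖h n‖ ^ 2 := by positivity
    calc ‖∑ n ∈ S, ∑ a ∈ T, φ n * B n a * f a * h n‖
        = ‖∑ n ∈ S, ∑ a ∈ T, B n a * f a * (φ n * h n)‖ := by
          congr! 3 with n _ a _; ring
      _ ≤ M / 2 * (∑ a ∈ T, ‖f a‖ ^ 2 + ∑ n ∈ S, ‖(φ n : ℂ) * h n‖ ^ 2) := hB.bound S T f _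
      _ ≤ M / 2 * ((1 + D ^ 2) * (∑ a ∈ T, ‖f a‖ ^ 2 + ∑ n ∈ S, ‖h n‖ ^ 2)) := by
          have := hB.nonneg
          gcongr
          nlinarith [mul_nonneg (sq_nonneg D) hF]
      _ = _ := by ring

theorem transpose (hB : IsFormBounded B M) : IsFormBounded (fun a n => B n a) M where
  nonneg := hB.nonneg
  bound S T f h := by
    rw [Finset.sum_comm, add_comm]
    simpa only [mul_right_comm] using hB.bound T S h f

theorem indicator_col (hB : IsFormBounded B M) (q : β → Prop) [DecidablePred q] :
    IsFormBounded (fun n a => if q a then B n a else 0) M where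
  nonneg := hB.nonneg
  bound S T f h := by
    classical
    calc _ = ‖∑ n ∈ S, ∑ a ∈ T.filter q, B n a * f a * h n‖ := by
          simp only [Finset.sum_filter, ite_mul, zero_mul]
      _ ≤ M / 2 * (∑ a ∈ T.filter q, ‖f a‖ ^ 2 + ∑ n ∈ S, ‖h n‖ ^ 2) := hB.bound _ _ f h
      _ ≤ _ := by
          have := hB.nonneg
          gcongr
          exact Finset.filter_subset _ _

theorem abs_le_of_hasSum (hB : IsFormBounded B M) {f : β → ℂ} {h : α → ℂ} {A F H : ℝ}
    (hA : HasSum (fun p : α × β => (B p.1 p.2 * f p.2 * h p.1).re) A)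
    (hF : HasSum (fun a => ‖f a‖ ^ 2) F) (hH : HasSum (fun n => ‖h n‖ ^ 2) H) :
    |A| ≤ M / 2 * (F + H) := by
  classical
  have hbox : Tendsto (fun R : Finset α × Finset β => R.1 ×ˢ R.2) atTop atTop := by
    refine tendsto_atTop_finset_of_monotone (fun R R' hR => Finset.product_subset_product hR.1 hR.2)
      fun p => ⟨({p.1}, {p.2}), by simp⟩
  refine le_of_tendsto (hA.comp hbox).abs (Eventually.of_forall fun R => ?_)
  have hre : ∑ p ∈ R.1 ×ˢ R.2, (B p.1 p.2 * f p.2 * h p.1).re =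
      (∑ n ∈ R.1, ∑ a ∈ R.2, B n a * f a * h n).re := by
    rw [Finset.sum_product, Complex.re_sum]
    simp only [Complex.re_sum]
  have := hB.nonneg
  calc _ ≤ ‖∑ n ∈ R.1, ∑ a ∈ R.2, B n a * f a * h n‖ := by
        simpa only [Function.comp_apply, hre] using Complex.abs_re_le_norm _
    _ ≤ M / 2 * (∑ a ∈ R.2, ‖f a‖ ^ 2 + ∑ n ∈ R.1, ‖h n‖ ^ 2) := hB.bound _ _ f h
    _ ≤ M / 2 * (F + H) := by
        gcongr
        · exact sum_le_hasSum _ (fun _ _ => sq_nonneg _) hF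
        · exact sum_le_hasSum _ (fun _ _ => sq_nonneg _) hH

end IsFormBounded

/-- On matrices supported in the relation `r`, entrywise multiplication by `K` increases the norm
of the bilinear form at most by the factor `C`. -/
def IsSchurMultiplierOn (r : α → β → Prop) (K : α → β → ℝ) (C : ℝ) : Prop :=
  ∀ (B : α → β → ℂ) (M : ℝ), (∀ n a, ¬ r n a → B n a = 0) → IsFormBounded B M →
    IsFormBounded (fun n a => K n a * B n a) (C * M)

/-- The kernels `K i` are Schur multipliers on `r` with a constant independent of `i`. -/
def IsUniformSchurMultiplierOn (r : α → β → Prop) (K : ι → α → β → ℝ) : Prop :=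
  ∃ C, ∀ i, IsSchurMultiplierOn r (K i) C

namespace IsUniformSchurMultiplierOn

variable {r : α → β → Prop} {K K' : ι → α → β → ℝ}

theorem congr (hK : IsUniformSchurMultiplierOn r K) (h : ∀ i n a, r n a → K' i n a = K i n a) :
    IsUniformSchurMultiplierOn r K' := by
  obtain ⟨C, hC⟩ := hK
  refine ⟨C, fun i B M hr hB => ?_⟩
  convert hC i B M hr hB using 3 with n a
  by_cases hna : r n a
  · rw [h i n a hna]
  · rw [hr n a hna, mul_zero, mul_zero]

theorem add (hK : IsUniformSchurMultiplierOn r K) (hK' : IsUniformSchurMultiplierOn r K') :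
    IsUniformSchurMultiplierOn r (fun i n a => K i n a + K' i n a) := by
  obtain ⟨C, hC⟩ := hK
  obtain ⟨C', hC'⟩ := hK'
  refine ⟨C + C', fun i B M hr hB => ?_⟩
  simpa only [Complex.ofReal_add, add_mul] using (hC i B M hr hB).add (hC' i B M hr hB)

theorem mul (hK : IsUniformSchurMultiplierOn r K) (hK' : IsUniformSchurMultiplierOn r K') :
    IsUniformSchurMultiplierOn r (fun i n a => K i n a * K' i n a) := by
  obtain ⟨C, hC⟩ := hK
  obtain ⟨C', hC'⟩ := hK'
  refine ⟨C * C', fun i B M hr hB => ?_⟩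
  have := hC i _ (C' * M) (fun n a hna => by rw [hr n a hna, mul_zero]) (hC' i B M hr hB)
  simpa only [Complex.ofReal_mul, mul_assoc] using this

theorem transpose (hK : IsUniformSchurMultiplierOn r K) :
    IsUniformSchurMultiplierOn (fun a n => r n a) (fun i a n => K i n a) := by
  obtain ⟨C, hC⟩ := hK
  exact ⟨C, fun i B M hr hB => (hC i _ M (fun n a => hr a n) hB.transpose).transpose⟩

theorem of_row {φ : ι → α → ℝ} {D : ℝ} (hφ : ∀ i n a, r n a → |φ i n| ≤ D) :
    IsUniformSchurMultiplierOn r (fun i n _ => φ i n) := by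
  refine ⟨1 + |D| ^ 2, fun i B M hr hB => ?_⟩
  convert hB.mul_row (φ := fun n => if |φ i n| ≤ D then φ i n else 0) (D := |D|)
    (fun n => by split_ifs with h; exacts [h.trans (le_abs_self D), by simp]) using 3 with n a
  by_cases hna : r n a
  · rw [if_pos (hφ i n a hna)]
  · rw [hr n a hna, mul_zero, mul_zero]

theorem of_col {φ : ι → β → ℝ} {D : ℝ} (hφ : ∀ i n a, r n a → |φ i a| ≤ D) :
    IsUniformSchurMultiplierOn r (fun i _ a => φ i a) :=
  (of_row (r := fun a n => r n a) fun i a n => hφ i n a).transpose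

theorem const (c : ℝ) : IsUniformSchurMultiplierOn r (fun (_ : ι) _ _ => c) :=
  of_row fun _ _ _ _ => le_refl |c|

theorem const_mul (c : ℝ) (hK : IsUniformSchurMultiplierOn r K) :
    IsUniformSchurMultiplierOn r (fun i n a => c * K i n a) :=
  (const c).mul hK

theorem sum {κ : Type*} (s : Finset κ) {L : κ → ι → α → β → ℝ}
    (hL : ∀ k ∈ s, IsUniformSchurMultiplierOn r (L k)) :
    IsUniformSchurMultiplierOn r (fun i n a => ∑ k ∈ s, L k i n a) := by
  classical
  induction s using Finset.induction_on with
  | empty => simpa using const 0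
  | insert k s hk ih =>
    simp only [Finset.sum_insert hk]
    exact (hL k (s.mem_insert_self k)).add (ih fun l hl => hL l (Finset.mem_insert_of_mem hl))

theorem pow (hK : IsUniformSchurMultiplierOn r K) (m : ℕ) :
    IsUniformSchurMultiplierOn r (fun i n a => K i n a ^ m) := by
  induction m with
  | zero => simpa using const 1
  | succ m ih => simpa only [pow_succ] using ih.mul hK

theorem polynomial_eval (hK : IsUniformSchurMultiplierOn r K) (p : Polynomial ℝ) :
    IsUniformSchurMultiplierOn r (fun i n a => p.eval (K i n a)) := by
  simp only [Polynomial.eval_eq_sum_range]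
  exact sum _ fun k _ => (hK.pow k).const_mul _

end IsUniformSchurMultiplierOn

theorem IsFormBounded.norm_integral_le {X : Type*} [MeasurableSpace X] {μ : Measure X}
    {B : α → β → ℂ} {M : ℝ} (hB : IsFormBounded B M) {x : α → X → ℝ} {y : β → X → ℝ}
    (hx : ∀ n, MemLp (x n) 2 μ) (hy : ∀ a, MemLp (y a) 2 μ)
    (S : Finset α) (T : Finset β) (f : β → ℂ) (h : α → ℂ) :
    ‖∫ t, ∑ n ∈ S, ∑ a ∈ T, B n a * (y a t * f a) * (x n t * h n) ∂μ‖ ≤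
      M / 2 * (∑ a ∈ T, ‖f a‖ ^ 2 * ∫ t, y a t ^ 2 ∂μ +
        ∑ n ∈ S, ‖h n‖ ^ 2 * ∫ t, x n t ^ 2 ∂μ) := by
  have hyI a : Integrable (fun t => ‖f a‖ ^ 2 * y a t ^ 2) μ := (hy a).integrable_sq.const_mul _
  have hxI n : Integrable (fun t => ‖h n‖ ^ 2 * x n t ^ 2) μ := (hx n).integrable_sq.const_mul _
  have hyS := integrable_finsetSum T fun a _ => hyI a
  have hxS := integrable_finsetSum S fun n _ => hxI n
  calc _ ≤ ∫ t, M / 2 * (∑ a ∈ T, ‖f a‖ ^ 2 * y a t ^ 2 + ∑ n ∈ S, ‖h n‖ ^ 2 * x n t ^ 2) ∂μ := by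
        refine norm_integral_le_of_norm_le ((hyS.add hxS).const_mul _)
          (Eventually.of_forall fun t => (hB.bound S T _ _).trans_eq ?_)
        simp only [norm_mul, mul_pow, Complex.norm_real, Real.norm_eq_abs, sq_abs, mul_comm]
    _ = _ := by
      rw [integral_const_mul, integral_add hyS hxS, integral_finsetSum _ fun a _ => hyI a,
        integral_finsetSum _ fun n _ => hxI n]
      simp only [integral_const_mul]

theorem IsSchurMultiplierOn.of_gram {X : Type*} [MeasurableSpace X] {μ : Measure X}
    {r : α → β → Prop} {K : α → β → ℝ} {C : ℝ} {x : α → X → ℝ} {y : β → X → ℝ}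
    (hx : ∀ n, MemLp (x n) 2 μ) (hy : ∀ a, MemLp (y a) 2 μ)
    (hxC : ∀ n, ∫ t, x n t ^ 2 ∂μ ≤ C) (hyC : ∀ a, ∫ t, y a t ^ 2 ∂μ ≤ C) (hC : 0 ≤ C)
    (hK : ∀ n a, r n a → K n a = ∫ t, y a t * x n t ∂μ) :
    IsSchurMultiplierOn r K C := by
  refine fun B M hr hB => ⟨mul_nonneg hC hB.nonneg, fun S T f h => ?_⟩
  have hterm n a : Integrable (fun t => B n a * (y a t * f a) * (x n t * h n)) μ := by
    have := (((hy a).integrable_mul (hx n)).ofReal (𝕜 := ℂ)).mul_const (B n a * f a * h n)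
    refine this.congr (Eventually.of_forall fun t => ?_)
    simp only [Pi.mul_apply, RCLike.ofReal_mul, RCLike.ofReal_eq_complex_ofReal]
    ring
  have hsum : ∑ n ∈ S, ∑ a ∈ T, K n a * B n a * f a * h n =
      ∫ t, ∑ n ∈ S, ∑ a ∈ T, B n a * (y a t * f a) * (x n t * h n) ∂μ := by
    rw [integral_finsetSum _ fun n _ => integrable_finsetSum _ fun a _ => hterm n a]
    refine Finset.sum_congr rfl fun n _ => ?_
    rw [integral_finsetSum _ fun a _ => hterm n a]
    refine Finset.sum_congr rfl fun a _ => ?_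
    by_cases hna : r n a
    · rw [hK n a hna, ← integral_complex_ofReal, mul_assoc, mul_assoc, ← integral_mul_const]
      refine integral_congr_ae (Eventually.of_forall fun t => ?_)
      simp only [Complex.ofReal_mul]
      ring
    · simp [hr n a hna]
  have hM := hB.nonneg
  calc _ ≤ M / 2 * (∑ a ∈ T, ‖f a‖ ^ 2 * ∫ t, y a t ^ 2 ∂μ +
          ∑ n ∈ S, ‖h n‖ ^ 2 * ∫ t, x n t ^ 2 ∂μ) := hsum ▸ hB.norm_integral_le hx hy S T f h
    _ ≤ M / 2 * (∑ a ∈ T, ‖f a‖ ^ 2 * C + ∑ n ∈ S, ‖h n‖ ^ 2 * C) := by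
      gcongr with a _ n _
      exacts [hyC a, hxC n]
    _ = C * M / 2 * (∑ a ∈ T, ‖f a‖ ^ 2 + ∑ n ∈ S, ‖h n‖ ^ 2) := by
      rw [← Finset.sum_mul, ← Finset.sum_mul]
      ring

theorem IsSchurMultiplierOn.div {r : α → β → Prop} {v : α → ℝ} {u : β → ℝ}
    (hu : ∀ n a, r n a → 0 ≤ u a) (huv : ∀ n a, r n a → u a ≤ v n) :
    IsSchurMultiplierOn r (fun n a => u a / v n) 1 := by
  let g (w : ℝ) : ℝ → ℝ := (Set.Ioc 0 (w ^ 2)).indicator fun _ => w⁻¹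
  have hg w : MemLp (g w) 2 := memLp_indicator_const 2 measurableSet_Ioc _ (by simp)
  have hmul {w z : ℝ} (hw : 0 ≤ w) (hwz : w ≤ z) : ∫ t, g w t * g z t = w / z := by
    have : (fun t => g w t * g z t) = (Set.Ioc 0 (w ^ 2)).indicator fun _ => w⁻¹ * z⁻¹ := by
      have hsub : Set.Ioc 0 (w ^ 2) ⊆ Set.Ioc 0 (z ^ 2) := Set.Ioc_subset_Ioc_right (by gcongr)
      ext t
      by_cases ht : t ∈ Set.Ioc 0 (w ^ 2)
      · simp [g, ht, hsub ht]
      · simp [g, ht]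
    rw [this, integral_indicator_const _ measurableSet_Ioc,
      Real.volume_real_Ioc_of_le (sq_nonneg w)]
    rcases eq_or_ne w 0 with rfl | hw0
    · simp
    · simp; field_simp
  have hsq w : ∫ t, g w t ^ 2 ≤ 1 := by
    have habs : ∀ t, g w t ^ 2 = g |w| t * g |w| t := fun t => by
      simp only [g, sq_abs, Set.indicator]; split_ifs <;> simp [← sq]
    simp only [habs, hmul (abs_nonneg w) le_rfl]
    exact div_self_le_one _
  exact of_gram (fun n => hg (v n)) (fun a => hg (u a)) (fun n => hsq _) (fun a => hsq _)
    zero_le_one fun n a hna => (hmul (hu n a hna) (huv n a hna)).symm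

end SchurMultipliers

/-! ### The Loewner matrix of a fractional power -/

section Loewner

open Real (rpowIntegrand₀₁)

variable {σ : ℝ}

/-- The square-integrable functions on `(0, ∞)` whose Gram matrix is, up to a constant, the
Loewner matrix of `z ↦ z ^ σ` normalized to have diagonal `σ`. -/
def loewnerVector (σ z t : ℝ) : ℝ := z ^ ((1 - σ) / 2) * (t ^ (σ / 2) / (t + z))

theorem measurable_loewnerVector (σ z : ℝ) : Measurable (loewnerVector σ z) := by
  unfold loewnerVector
  fun_prop (disch := measurability)

theorem loewnerVector_mul {t : ℝ} (ht : 0 < t) (y z : ℝ) :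
    loewnerVector σ y t * loewnerVector σ z t =
      y ^ ((1 - σ) / 2) * z ^ ((1 - σ) / 2) * (t ^ σ / ((t + y) * (t + z))) := by
  have hσ : t ^ σ = t ^ (σ / 2) * t ^ (σ / 2) := by rw [← Real.rpow_add ht, add_halves]
  rw [loewnerVector, loewnerVector, hσ]
  field_simp

theorem loewnerVector_sq_le {z t : ℝ} (hz : 0 < z) (ht : 0 < t) :
    loewnerVector σ z t ^ 2 ≤ z ^ (-σ) * rpowIntegrand₀₁ σ t z := by
  have hzσ : z ^ ((1 - σ) / 2) * z ^ ((1 - σ) / 2) = z ^ (-σ) * z := by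
    rw [← Real.rpow_add hz, ← Real.rpow_add_one hz.ne']
    ring_nf
  have hint : rpowIntegrand₀₁ σ t z = z * (t ^ σ / ((t + z) * t)) := by
    rw [rpowIntegrand₀₁]
    field_simp
    ring
  rw [sq, loewnerVector_mul ht, hzσ, hint, ← mul_assoc]
  gcongr
  linarith

theorem integrableOn_loewnerVector_sq (hσ : σ ∈ Set.Ioo (0 : ℝ) 1) {z : ℝ} (hz : 0 < z) :
    IntegrableOn (fun t => loewnerVector σ z t ^ 2) (Set.Ioi 0) := by
  refine Integrable.mono' ((Real.integrableOn_rpowIntegrand₀₁_Ioi hσ hz.le).const_mul (z ^ (-σ)))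
    ((measurable_loewnerVector σ z).pow_const 2).aestronglyMeasurable
    ((ae_restrict_mem measurableSet_Ioi).mono fun t ht => ?_)
  rw [Real.norm_of_nonneg (sq_nonneg _)]
  exact loewnerVector_sq_le hz ht

theorem memLp_loewnerVector (hσ : σ ∈ Set.Ioo (0 : ℝ) 1) {z : ℝ} (hz : 0 < z) :
    MemLp (loewnerVector σ z) 2 (volume.restrict (Set.Ioi 0)) :=
  (memLp_two_iff_integrable_sq (measurable_loewnerVector σ z).aestronglyMeasurable).2
    (integrableOn_loewnerVector_sq hσ hz)

theorem integral_loewnerVector_sq_le (hσ : σ ∈ Set.Ioo (0 : ℝ) 1) {z : ℝ} (hz : 0 < z) :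
    ∫ t in Set.Ioi 0, loewnerVector σ z t ^ 2 ≤ ∫ t in Set.Ioi 0, rpowIntegrand₀₁ σ t 1 :=
  calc _ ≤ ∫ t in Set.Ioi 0, z ^ (-σ) * rpowIntegrand₀₁ σ t z :=
        setIntegral_mono_on (integrableOn_loewnerVector_sq hσ hz)
          ((Real.integrableOn_rpowIntegrand₀₁_Ioi hσ hz.le).const_mul _) measurableSet_Ioi
          fun t ht => loewnerVector_sq_le hz ht
    _ = _ := by
        rw [integral_const_mul, Real.integral_rpowIntegrand₀₁_eq_rpow_mul_const hσ hz.le,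
          ← mul_assoc, ← Real.rpow_add hz, neg_add_cancel, Real.rpow_zero, one_mul]

theorem sub_mul_integral_loewnerVector_mul (hσ : σ ∈ Set.Ioo (0 : ℝ) 1) {y z : ℝ} (hy : 0 < y)
    (hz : 0 < z) :
    (y - z) * ∫ t in Set.Ioi 0, loewnerVector σ z t * loewnerVector σ y t =
      y ^ ((1 - σ) / 2) * z ^ ((1 - σ) / 2) * (y ^ σ - z ^ σ) *
        ∫ t in Set.Ioi 0, rpowIntegrand₀₁ σ t 1 := by
  rw [mul_assoc, sub_mul (y ^ σ), ← Real.integral_rpowIntegrand₀₁_eq_rpow_mul_const hσ hy.le,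
    ← Real.integral_rpowIntegrand₀₁_eq_rpow_mul_const hσ hz.le,
    ← integral_sub (Real.integrableOn_rpowIntegrand₀₁_Ioi hσ hy.le)
      (Real.integrableOn_rpowIntegrand₀₁_Ioi hσ hz.le), ← integral_const_mul, ← integral_const_mul]
  refine setIntegral_congr_fun measurableSet_Ioi fun t (ht : 0 < t) => ?_
  simp only [loewnerVector_mul ht, rpowIntegrand₀₁]
  field_simp
  ring

theorem loewner_ratio_eq (σ : ℝ) {y z : ℝ} (hy : 0 < y) (hz : 0 < z) :
    ((y / z) ^ σ - 1) / (y / z - 1) * (y / z) ^ ((1 - σ) / 2) =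
      y ^ ((1 - σ) / 2) * z ^ ((1 - σ) / 2) * (y ^ σ - z ^ σ) / (y - z) := by
  have hzσ : z / z ^ σ = z ^ ((1 - σ) / 2) * z ^ ((1 - σ) / 2) := by
    rw [← Real.rpow_add hz, add_halves, Real.rpow_sub hz, Real.rpow_one]
  calc _ = (y ^ σ / z ^ σ - 1) / (y / z - 1) * (y ^ ((1 - σ) / 2) / z ^ ((1 - σ) / 2)) := by
        rw [Real.div_rpow hy.le hz.le, Real.div_rpow hy.le hz.le]
    _ = z / z ^ σ * (y ^ ((1 - σ) / 2) / z ^ ((1 - σ) / 2)) * (y ^ σ - z ^ σ) / (y - z) := by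
        field_simp
    _ = _ := by rw [hzσ]; field_simp

theorem IsUniformSchurMultiplierOn.loewner {ι α β : Type*} {r : α → β → Prop} {y : α → ℝ}
    {z : β → ℝ} (hσ : σ ∈ Set.Ioo (0 : ℝ) 1) (hy : ∀ n, 0 < y n) (hz : ∀ a, 0 < z a)
    (hr : ∀ n a, r n a → y n ≠ z a) :
    IsUniformSchurMultiplierOn r (fun (_ : ι) n a =>
      ((y n / z a) ^ σ - 1) / (y n / z a - 1) * (y n / z a) ^ ((1 - σ) / 2)) := by
  have hc : 0 < ∫ t in Set.Ioi 0, rpowIntegrand₀₁ σ t 1 := Real.integral_rpowIntegrand₀₁_one_pos hσ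
  have hgram : IsUniformSchurMultiplierOn r (fun (_ : ι) n a =>
      ∫ t in Set.Ioi 0, loewnerVector σ (z a) t * loewnerVector σ (y n) t) :=
    ⟨_, fun _ => .of_gram (fun n => memLp_loewnerVector hσ (hy n))
      (fun a => memLp_loewnerVector hσ (hz a)) (fun n => integral_loewnerVector_sq_le hσ (hy n))
      (fun a => integral_loewnerVector_sq_le hσ (hz a)) hc.le fun _ _ _ => rfl⟩
  refine (hgram.const_mul (∫ t in Set.Ioi 0, rpowIntegrand₀₁ σ t 1)⁻¹).congr fun _ n a hna => ?_
  rw [loewner_ratio_eq σ (hy n) (hz a), div_eq_iff (sub_ne_zero.2 (hr n a hna)), eq_comm, mul_assoc,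
    mul_comm _ (y n - z a), sub_mul_integral_loewnerVector_mul hσ (hy n) (hz a),
    mul_left_comm, inv_mul_cancel₀ hc.ne', mul_one]

end Loewner

namespace FC

/-! ### The kernel of the symmetrized form -/

section Kernel

/-- The symbol of the Helmholtz operator `1 - ε²∂ₓ²`, inverse to that of `T̃_ε`. -/
def helmSymbol (ε : ℝ) (k : ℤ) : ℝ := 1 + ε ^ 2 * (k : ℝ) ^ 2

/-- The symbol of `(1 - ∂ₓ²)^{s/2} T̃_ε`, whose square is the weight of `‖T̃_ε θ‖²_{H^s}`. -/
def mollSymbol (s ε : ℝ) (k : ℤ) : ℝ := helmSymbol 1 k ^ (s / 2) / helmSymbol ε k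

/-- The pairs of frequencies that survive the reduction to positive frequencies. -/
def PosBelow (n a : ℤ) : Prop := 0 < a ∧ a < n

instance decidablePosBelow (n a : ℤ) : Decidable (PosBelow n a) :=
  inferInstanceAs (Decidable (0 < a ∧ a < n))

theorem helmSymbol_pos (ε : ℝ) (k : ℤ) : 0 < helmSymbol ε k := by unfold helmSymbol; positivity

theorem mollSymbol_pos (s ε : ℝ) (k : ℤ) : 0 < mollSymbol s ε k :=
  div_pos (Real.rpow_pos_of_pos (helmSymbol_pos 1 k) _) (helmSymbol_pos ε k)

theorem PosBelow.cast {n a : ℤ} (h : PosBelow n a) : (0 : ℝ) < a ∧ (a : ℝ) < n := by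
  exact_mod_cast h

theorem PosBelow.helmSymbol_le {n a : ℤ} (h : PosBelow n a) (ε : ℝ) :
    helmSymbol ε a ≤ helmSymbol ε n := by
  obtain ⟨ha, han⟩ := h.cast
  unfold helmSymbol
  gcongr

theorem PosBelow.helmSymbol_one_lt {n a : ℤ} (h : PosBelow n a) :
    helmSymbol 1 a < helmSymbol 1 n := by
  obtain ⟨ha, han⟩ := h.cast
  unfold helmSymbol
  gcongr

variable {s t : ℝ} {J : ℕ}

theorem isUniformSchurMultiplierOn_div :
    IsUniformSchurMultiplierOn PosBelow (fun (_ : ℝ) n a => (a : ℝ) / n) :=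
  ⟨1, fun _ => .div (fun _ _ h => h.cast.1.le) fun _ _ h => h.cast.2.le⟩

theorem isUniformSchurMultiplierOn_helmSymbol_div :
    IsUniformSchurMultiplierOn PosBelow (fun ε n a => helmSymbol ε a / helmSymbol ε n) :=
  ⟨1, fun ε => .div (fun _ a _ => (helmSymbol_pos ε a).le) fun _ _ h => h.helmSymbol_le ε⟩

theorem isUniformSchurMultiplierOn_rpow_of_nonpos (ht : t ≤ 0) :
    IsUniformSchurMultiplierOn PosBelow
      (fun (_ : ℝ) n a => (helmSymbol 1 n / helmSymbol 1 a) ^ t) := by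
  have hdiv : IsUniformSchurMultiplierOn PosBelow
      (fun (_ : ℝ) n a => helmSymbol 1 a ^ (-t) / helmSymbol 1 n ^ (-t)) :=
    ⟨1, fun _ => .div (fun _ a _ => (Real.rpow_pos_of_pos (helmSymbol_pos 1 a) _).le) fun n a h =>
      Real.rpow_le_rpow (helmSymbol_pos 1 a).le h.helmSymbol_one_lt.le (by linarith)⟩
  refine hdiv.congr fun _ n a _ => ?_
  have hn := helmSymbol_pos 1 n
  have ha := helmSymbol_pos 1 a
  rw [Real.div_rpow hn.le ha.le, Real.rpow_neg hn.le, Real.rpow_neg ha.le]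
  field_simp

theorem isUniformSchurMultiplierOn_sq_div_helmSymbol :
    IsUniformSchurMultiplierOn PosBelow (fun (_ : ℝ) n _ => (n : ℝ) ^ 2 / helmSymbol 1 n) := by
  refine .of_row (D := 1) fun _ n _ _ => ?_
  have hn := helmSymbol_pos 1 n
  rw [abs_of_nonneg (by positivity), div_le_one hn]
  unfold helmSymbol
  linarith

theorem isUniformSchurMultiplierOn_mul_sq_div_helmSymbol :
    IsUniformSchurMultiplierOn PosBelow
      (fun ε _ a => ε ^ 2 * (a : ℝ) ^ 2 / helmSymbol ε a) := by
  refine .of_col (D := 1) fun ε _ a _ => ?_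
  have ha := helmSymbol_pos ε a
  rw [abs_of_nonneg (by positivity), div_le_one ha]
  unfold helmSymbol
  linarith

theorem isUniformSchurMultiplierOn_pow_mul_rpow (ht : t ≤ J) :
    IsUniformSchurMultiplierOn PosBelow (fun (_ : ℝ) n a =>
      ((a : ℝ) / n) ^ (2 * J) * (helmSymbol 1 n / helmSymbol 1 a) ^ t) := by
  have hrow : IsUniformSchurMultiplierOn PosBelow
      (fun (_ : ℝ) n _ => helmSymbol 1 n / (n : ℝ) ^ 2) := by
    refine .of_row (D := 2) fun _ n a h => ?_
    have hn : (1 : ℝ) ≤ n := by exact_mod_cast h.1.trans h.2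
    have := helmSymbol_pos 1 n
    rw [abs_of_nonneg (by positivity), div_le_iff₀ (by positivity), helmSymbol]
    nlinarith
  have hcol : IsUniformSchurMultiplierOn PosBelow
      (fun (_ : ℝ) _ a => (a : ℝ) ^ 2 / helmSymbol 1 a) := by
    refine .of_col (D := 1) fun _ _ a _ => ?_
    have ha := helmSymbol_pos 1 a
    rw [abs_of_nonneg (by positivity), div_le_one ha, helmSymbol]
    linarith
  refine (((hrow.mul hcol).pow J).mul (isUniformSchurMultiplierOn_rpow_of_nonpos
    (sub_nonpos.2 ht))).congr fun _ n a _ => ?_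
  rw [Real.rpow_sub (div_pos (helmSymbol_pos 1 n) (helmSymbol_pos 1 a)), Real.rpow_natCast, pow_mul,
    ← mul_comm_div]
  have hn := helmSymbol_pos 1 n
  have ha := helmSymbol_pos 1 a
  have hxY : ((a : ℝ) / n) ^ 2 * (helmSymbol 1 n / helmSymbol 1 a) =
      helmSymbol 1 n / (n : ℝ) ^ 2 * ((a : ℝ) ^ 2 / helmSymbol 1 a) := by ring
  rw [← hxY, mul_pow]
  field_simp

theorem isUniformSchurMultiplierOn_mollSymbol_div (hs : 2 ≤ s) :
    IsUniformSchurMultiplierOn PosBelow (fun ε n a => mollSymbol s ε a / mollSymbol s ε n) := by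
  have hcol : IsUniformSchurMultiplierOn PosBelow (fun ε _ a => (helmSymbol ε a)⁻¹) := by
    refine .of_col (D := 1) fun ε _ a _ => ?_
    rw [abs_of_pos (inv_pos.2 (helmSymbol_pos ε a))]
    exact inv_le_one_of_one_le₀ (by unfold helmSymbol; nlinarith [sq_nonneg (ε * a)])
  have hcol' : IsUniformSchurMultiplierOn PosBelow
      (fun ε _ a => ε ^ 2 * helmSymbol 1 a / helmSymbol ε a) := by
    refine .of_col (D := 2) fun ε _ a h => ?_
    have ha : (1 : ℝ) ≤ a := by exact_mod_cast h.1
    have := helmSymbol_pos 1 a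
    have := helmSymbol_pos ε a
    rw [abs_of_nonneg (by positivity), div_le_iff₀ (by positivity), helmSymbol, helmSymbol]
    nlinarith [sq_nonneg ε, mul_le_mul_of_nonneg_left (one_le_pow₀ ha : 1 ≤ (a : ℝ) ^ 2)
      (sq_nonneg ε)]
  have hone : IsUniformSchurMultiplierOn PosBelow
      (fun (_ : ℝ) n a => helmSymbol 1 a / helmSymbol 1 n) :=
    ⟨1, fun _ => .div (fun _ a _ => (helmSymbol_pos 1 a).le) fun _ _ h => h.helmSymbol_le 1⟩
  refine ((isUniformSchurMultiplierOn_rpow_of_nonpos (t := 1 - s / 2) (by linarith)).mul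
    ((hcol.mul hone).add (hcol'.mul isUniformSchurMultiplierOn_sq_div_helmSymbol))).congr
    fun ε n a _ => ?_
  have hN := helmSymbol_pos 1 n
  have hA := helmSymbol_pos 1 a
  have hN' := helmSymbol_pos ε n
  have hA' := helmSymbol_pos ε a
  have hsum : (helmSymbol ε a)⁻¹ * (helmSymbol 1 a / helmSymbol 1 n) +
      ε ^ 2 * helmSymbol 1 a / helmSymbol ε a * ((n : ℝ) ^ 2 / helmSymbol 1 n) =
      helmSymbol 1 a / helmSymbol 1 n * (helmSymbol ε n / helmSymbol ε a) := by
    field_simp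
    rw [helmSymbol.eq_def ε n]
  rw [hsum, Real.rpow_sub (div_pos hN hA), Real.rpow_one, Real.div_rpow hN.le hA.le, mollSymbol,
    mollSymbol]
  field_simp

theorem rpow_sub_rpow_neg_div_eq {Y x c σ : ℝ} (m : ℕ) (hY : 1 < Y) (hx : x ≠ 1)
    (hc : Y - 1 = (1 - x) * (c * Y)) :
    (Y ^ (m * σ / 2) - Y ^ (-(m * σ / 2))) / (1 - x) =
      c * ((Y ^ σ - 1) / (Y - 1) * Y ^ ((1 - σ) / 2)) *
        ∑ k ∈ Finset.range m, Y ^ ((1 + σ) / 2 + k * σ - m * σ / 2) := by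
  have hY0 : 0 < Y := by linarith
  have hx' : 1 - x ≠ 0 := sub_ne_zero.2 hx.symm
  have hgeom : (Y ^ σ - 1) * ∑ k ∈ Finset.range m, Y ^ (k * σ) = Y ^ (m * σ) - 1 := by
    have hpow (k : ℕ) : Y ^ (k * σ) = (Y ^ σ) ^ k := by
      rw [mul_comm, Real.rpow_mul hY0.le, Real.rpow_natCast]
    simp only [hpow, mul_geom_sum]
  have hterm (k : ℕ) : Y ^ ((1 + σ) / 2 + k * σ - m * σ / 2) =
      Y * (Y ^ ((1 - σ) / 2))⁻¹ * Y ^ (-(m * σ / 2)) * Y ^ (k * σ) := by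
    rw [show (1 + σ) / 2 + k * σ - m * σ / 2 = 1 + -((1 - σ) / 2) + -(m * σ / 2) + k * σ by ring]
    simp only [Real.rpow_add hY0, Real.rpow_one]
    rw [Real.rpow_neg hY0.le ((1 - σ) / 2)]
  have hdiff : Y ^ (m * σ / 2) - Y ^ (-(m * σ / 2)) = Y ^ (-(m * σ / 2)) * (Y ^ (m * σ) - 1) := by
    rw [mul_sub_one, ← Real.rpow_add hY0]
    ring_nf
  have hY1 : Y - 1 ≠ 0 := by linarith
  have hw : Y ^ ((1 - σ) / 2) ≠ 0 := (Real.rpow_pos_of_pos hY0 _).ne'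
  simp only [hterm, ← Finset.mul_sum]
  rw [hdiff, ← hgeom]
  field_simp
  rw [hc]
  ring

/-- The difference quotient is resolved by the Loewner matrix of `y ^ (s / m)` with `m > s`. -/
theorem isUniformSchurMultiplierOn_rpow_sub_div (hs : 0 < s) (hJ : (s + 1) / 2 ≤ J) :
    IsUniformSchurMultiplierOn PosBelow (fun (_ : ℝ) n a => ((a : ℝ) / n) ^ (2 * J) *
      (((helmSymbol 1 n / helmSymbol 1 a) ^ (s / 2) -
        (helmSymbol 1 n / helmSymbol 1 a) ^ (-(s / 2))) / (1 - (a : ℝ) / n))) := by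
  obtain ⟨m, hm⟩ := exists_nat_gt s
  have hm0 : (0 : ℝ) < m := hs.trans hm
  set σ := s / m with hσ
  have hσ1 : σ < 1 := (div_lt_one hm0).2 hm
  have hmσ : s = m * σ := by rw [hσ]; field_simp
  have hsum := IsUniformSchurMultiplierOn.sum (Finset.range m) fun k hk =>
    isUniformSchurMultiplierOn_pow_mul_rpow (J := J) (t := (1 + σ) / 2 + k * σ - m * σ / 2) <| by
      have hk : (k : ℝ) + 1 ≤ m := by exact_mod_cast Finset.mem_range.1 hk
      nlinarith [mul_le_mul_of_nonneg_right hk (by positivity : 0 ≤ σ)]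
  have hloewner := IsUniformSchurMultiplierOn.loewner (ι := ℝ) (r := PosBelow)
    ⟨by positivity, hσ1⟩ (helmSymbol_pos 1) (helmSymbol_pos 1) fun _ _ h => h.helmSymbol_one_lt.ne'
  refine ((((IsUniformSchurMultiplierOn.const 1).add isUniformSchurMultiplierOn_div).mul
    isUniformSchurMultiplierOn_sq_div_helmSymbol).mul hloewner |>.mul hsum).congr fun _ n a h => ?_
  obtain ⟨ha, han⟩ := h.cast
  have hn : (0 : ℝ) < n := ha.trans han
  have hA := helmSymbol_pos 1 a
  have hN := helmSymbol_pos 1 n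
  have hY : helmSymbol 1 n / helmSymbol 1 a - 1 =
      (1 - (a : ℝ) / n) * ((1 + (a : ℝ) / n) * ((n : ℝ) ^ 2 / helmSymbol 1 n) *
        (helmSymbol 1 n / helmSymbol 1 a)) := by
    field_simp
    rw [helmSymbol, helmSymbol]
    ring
  rw [hmσ, rpow_sub_rpow_neg_div_eq m ((one_lt_div hA).2 h.helmSymbol_one_lt)
    ((div_lt_one hn).2 han).ne hY, ← Finset.mul_sum]
  ring

theorem isUniformSchurMultiplierOn_helmSymbol_sub_div (hs : 0 ≤ s) :
    IsUniformSchurMultiplierOn PosBelow (fun ε n a => ((a : ℝ) / n) ^ 2 *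
      ((helmSymbol 1 n / helmSymbol 1 a) ^ (-(s / 2)) *
        ((helmSymbol ε a / helmSymbol ε n - helmSymbol ε n / helmSymbol ε a) /
          (1 - (a : ℝ) / n)))) := by
  have hone := IsUniformSchurMultiplierOn.const (ι := ℝ) (r := PosBelow) 1
  refine (((isUniformSchurMultiplierOn_rpow_of_nonpos (t := -(s / 2)) (by linarith)).mul
    (hone.add isUniformSchurMultiplierOn_helmSymbol_div)).mul
    ((hone.add isUniformSchurMultiplierOn_div).mul
      isUniformSchurMultiplierOn_mul_sq_div_helmSymbol) |>.const_mul (-1)).congr fun ε n a h => ?_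
  obtain ⟨ha, han⟩ := h.cast
  have hn : (0 : ℝ) < n := ha.trans han
  have hA := helmSymbol_pos ε a
  have hN := helmSymbol_pos ε n
  have hsub : helmSymbol ε a - helmSymbol ε n = -(ε ^ 2 * (n - a) * (n + a)) := by
    rw [helmSymbol, helmSymbol]; ring
  have hdiff : (helmSymbol ε a / helmSymbol ε n - helmSymbol ε n / helmSymbol ε a) /
      (1 - (a : ℝ) / n) = (helmSymbol ε a - helmSymbol ε n) *
        (helmSymbol ε a + helmSymbol ε n) / (helmSymbol ε n * helmSymbol ε a) * (n / (n - a)) := by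
    have : (n : ℝ) - a ≠ 0 := by linarith
    field_simp
    ring
  have : (n : ℝ) - a ≠ 0 := by linarith
  rw [hdiff, hsub]
  field_simp
  ring

theorem isUniformSchurMultiplierOn_mollSymbol_sub_div (hs : 2 ≤ s) (hJ : (s + 1) / 2 ≤ J) :
    IsUniformSchurMultiplierOn PosBelow (fun ε n a => ((a : ℝ) / n) ^ (2 * J + 2) *
      ((mollSymbol s ε n / mollSymbol s ε a - mollSymbol s ε a / mollSymbol s ε n) /
        (1 - (a : ℝ) / n))) := by
  refine (((isUniformSchurMultiplierOn_div.pow 2).mul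
    isUniformSchurMultiplierOn_helmSymbol_div).mul
    (isUniformSchurMultiplierOn_rpow_sub_div (by linarith) hJ) |>.add
    ((isUniformSchurMultiplierOn_div.pow (2 * J)).mul
      (isUniformSchurMultiplierOn_helmSymbol_sub_div (s := s) (by linarith)))).congr
    fun ε n a _ => ?_
  have hA := helmSymbol_pos 1 a
  have hN := helmSymbol_pos 1 n
  have hA' := helmSymbol_pos ε a
  have hN' := helmSymbol_pos ε n
  rw [Real.rpow_neg (by positivity), Real.div_rpow hN.le hA.le, mollSymbol, mollSymbol]
  generalize (a : ℝ) / n = x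
  field_simp
  ring

theorem exists_polynomial_partition (R : ℕ) : ∃ q p : Polynomial ℝ,
    (∀ x : ℝ, x ^ (R + 1) * q.eval x + (1 - x) * p.eval x = 1) ∧
    (∀ x : ℝ, x ^ (R + 1) * q.eval x + (1 - x) ^ (R + 1) * q.eval (1 - x) = 1) := by
  have hcop : IsCoprime (Polynomial.X : Polynomial ℝ) (1 - Polynomial.X) := ⟨1, 1, by ring⟩
  obtain ⟨u, v, huv⟩ := hcop.pow (m := R + 1) (n := R + 1)
  have heval (x : ℝ) : u.eval x * x ^ (R + 1) + v.eval x * (1 - x) ^ (R + 1) = 1 := by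
    simpa using congrArg (Polynomial.eval x) huv
  let q : Polynomial ℝ := Polynomial.C (1 / 2) * (u + v.comp (1 - Polynomial.X))
  have hq (x : ℝ) : q.eval x = 1 / 2 * (u.eval x + v.eval (1 - x)) := by simp [q]
  have hsymm (x : ℝ) : x ^ (R + 1) * q.eval x + (1 - x) ^ (R + 1) * q.eval (1 - x) = 1 := by
    have h := heval x
    have h' := heval (1 - x)
    rw [sub_sub_cancel] at h'
    rw [hq, hq, sub_sub_cancel]
    linear_combination h / 2 + h' / 2
  refine ⟨q, (1 - Polynomial.X) ^ R * q.comp (1 - Polynomial.X), fun x => ?_, hsymm⟩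
  refine Eq.trans ?_ (hsymm x)
  simp only [Polynomial.eval_mul, Polynomial.eval_pow, Polynomial.eval_sub, Polynomial.eval_one,
    Polynomial.eval_X, Polynomial.eval_comp]
  ring

/-- The kernel of the form that remains after symmetrization, relative to the normalization
`mollSymbol s ε n * mollSymbol s ε a` of its arguments and to the Toeplitz matrix of the positive
part of `-i ∂ₓθ`; the cutoff `η` distributes the leading term between the two low frequencies. -/
def symmKernel (s : ℝ) (η : ℝ → ℝ) (ε : ℝ) (n a : ℤ) : ℝ :=
  (mollSymbol s ε n ^ 2 * (n * η (a / n)) - mollSymbol s ε a ^ 2 * (n - a) -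
      mollSymbol s ε a ^ 2 * n) /
    ((n - a) * (mollSymbol s ε n * mollSymbol s ε a))

theorem exists_isUniformSchurMultiplierOn_symmKernel (hs : 2 ≤ s) : ∃ η : ℝ → ℝ,
    Continuous η ∧ (∀ x, η x + η (1 - x) = 1) ∧
      IsUniformSchurMultiplierOn PosBelow (symmKernel s η) := by
  obtain ⟨J, hJ⟩ := exists_nat_ge ((s + 1) / 2)
  obtain ⟨q, p, hp, hq⟩ := exists_polynomial_partition (2 * J + 1)
  refine ⟨fun x => x ^ (2 * J + 2) * q.eval x, by fun_prop, hq, ?_⟩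
  refine (((isUniformSchurMultiplierOn_div.polynomial_eval q).mul
    (isUniformSchurMultiplierOn_mollSymbol_sub_div hs hJ)).add
    (((isUniformSchurMultiplierOn_mollSymbol_div hs).mul
      ((IsUniformSchurMultiplierOn.const 1).add
        (isUniformSchurMultiplierOn_div.polynomial_eval p))).const_mul (-1))).congr
    fun ε n a h => ?_
  obtain ⟨ha, han⟩ := h.cast
  have hn : (n : ℝ) ≠ 0 := (ha.trans han).ne'
  have hna : (n : ℝ) - a ≠ 0 := (sub_pos.2 han).ne'
  have hx : (1 - (a : ℝ) / n) ≠ 0 := by rw [one_sub_div hn]; positivity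
  have hVn := (mollSymbol_pos s ε n).ne'
  have hVa := (mollSymbol_pos s ε a).ne'
  have hnx : (n : ℝ) - a = n * (1 - a / n) := by field_simp
  have hpx := hp (a / n)
  rw [symmKernel, hnx]
  generalize (a : ℝ) / n = x at *
  field_simp
  linear_combination mollSymbol s ε a ^ 2 * hpx

end Kernel

/-! ### Toeplitz matrices -/

section Toeplitz

open AddCircle

local instance factTwoPiPos : Fact (0 < 2 * Real.pi) := ⟨Real.two_pi_pos⟩

/-- The function on the circle with absolutely summable Fourier coefficients `γ`: the bundled
version of `eval γ`. -/
def toContinuousMap (γ : FC) : C(AddCircle (2 * Real.pi), ℂ) := ∑' k, γ k • fourier k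

variable {γ : FC}

theorem hasSum_toContinuousMap (hγ : Summable fun k => ‖γ k‖) :
    HasSum (fun k => γ k • fourier k) (toContinuousMap γ) :=
  (Summable.of_norm (by simpa only [norm_smul, fourier_norm, mul_one])).hasSum

theorem toContinuousMap_apply_coe (hγ : Summable fun k => ‖γ k‖) (x : ℝ) :
    toContinuousMap γ x = eval γ x := by
  refine (ContinuousMap.tsum_apply (hasSum_toContinuousMap hγ).summable x).symm.trans
    (tsum_congr fun k => ?_)
  rw [ContinuousMap.smul_apply, fourier_coe_apply, smul_eq_mul]
  congr 2
  push_cast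
  field_simp

theorem norm_toContinuousMap_le (hγ : Summable fun k => ‖γ k‖) {G : ℝ}
    (hG : ∀ x, ‖eval γ x‖ ≤ G) (t : AddCircle (2 * Real.pi)) : ‖toContinuousMap γ t‖ ≤ G := by
  induction t using QuotientAddGroup.induction_on with
  | H x => exact (toContinuousMap_apply_coe hγ x).symm ▸ hG x

theorem inner_fourierLp_mul_fourier (hγ : Summable fun k => ‖γ k‖) (n a : ℤ) :
    inner ℂ (fourierLp 2 n)
      (ContinuousMap.toLp 2 haarAddCircle ℂ (toContinuousMap γ * fourier a)) = γ (n - a) := by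
  let Φ := innerSL ℂ (fourierLp 2 n) ∘L ContinuousMap.toLp 2 (haarAddCircle (T := 2 * Real.pi)) ℂ
  have hterm k : Φ (γ k • fourier k * fourier a) = if k = n - a then γ (n - a) else 0 := by
    have hshift : fourier k * fourier a = (fourier (k + a) : C(AddCircle (2 * Real.pi), ℂ)) :=
      ContinuousMap.ext fun _ => fourier_add.symm
    have horth : Φ (fourier (k + a)) = if n = k + a then 1 else 0 :=
      orthonormal_iff_ite.mp orthonormal_fourier n (k + a)
    rw [smul_mul_assoc, hshift, map_smul, horth, smul_eq_mul, mul_ite, mul_one, mul_zero]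
    grind
  have h := ((hasSum_toContinuousMap hγ).mul_right (fourier a)).mapL Φ
  simp only [hterm] at h
  exact h.unique (hasSum_ite_eq (n - a) (γ (n - a)))

theorem norm_sq_sum_fourierLp (T : Finset ℤ) (f : ℤ → ℂ) :
    ‖∑ a ∈ T, f a • (fourierLp 2 a : Lp ℂ 2 (haarAddCircle (T := 2 * Real.pi)))‖ ^ 2 =
      ∑ a ∈ T, ‖f a‖ ^ 2 := by
  rw [@norm_sq_eq_re_inner ℂ, orthonormal_fourier.inner_sum]
  simp [Complex.conj_mul', ← Complex.ofReal_pow]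

theorem isFormBounded_toeplitz (hγ : Summable fun k => ‖γ k‖) {G : ℝ}
    (hG : ∀ x, ‖eval γ x‖ ≤ G) : IsFormBounded (fun n a => γ (n - a)) G where
  nonneg := (norm_nonneg _).trans (hG 0)
  bound S T f h := by
    let P : C(AddCircle (2 * Real.pi), ℂ) := ∑ a ∈ T, f a • fourier a
    let L := ContinuousMap.toLp (E := ℂ) 2 (haarAddCircle (T := 2 * Real.pi)) ℂ
    let Q := ∑ n ∈ S, starRingEnd ℂ (h n) • fourierLp (T := 2 * Real.pi) 2 n
    have hform : inner ℂ Q (L (toContinuousMap γ * P)) =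
        ∑ n ∈ S, ∑ a ∈ T, γ (n - a) * f a * h n := by
      simp only [P, Q, L, Finset.mul_sum, mul_smul_comm, map_sum, map_smul, sum_inner, inner_sum,
        inner_smul_left, inner_smul_right, inner_fourierLp_mul_fourier hγ, Complex.conj_conj]
      rw [Finset.sum_comm]
      congr! 2 with n _ a _
      ring
    have hmul : ‖L (toContinuousMap γ * P)‖ ≤ G * ‖L P‖ := by
      refine Lp.norm_le_mul_norm_of_ae_le_mul ?_
      filter_upwards [ContinuousMap.coeFn_toLp (𝕜 := ℂ) (p := 2) haarAddCircle P,
        ContinuousMap.coeFn_toLp (𝕜 := ℂ) (p := 2) haarAddCircle (toContinuousMap γ * P)]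
        with t hP hgP
      rw [hP, hgP, ContinuousMap.mul_apply, norm_mul]
      gcongr
      exact norm_toContinuousMap_le hγ hG t
    have hP : ‖L P‖ ^ 2 = ∑ a ∈ T, ‖f a‖ ^ 2 := by
      simpa only [L, P, map_sum, map_smul] using norm_sq_sum_fourierLp T f
    have hQ : ‖Q‖ ^ 2 = ∑ n ∈ S, ‖h n‖ ^ 2 := by
      simpa only [RCLike.norm_conj] using norm_sq_sum_fourierLp S fun n => starRingEnd ℂ (h n)
    have hG0 := (norm_nonneg _).trans (hG 0)
    calc _ ≤ ‖Q‖ * ‖L (toContinuousMap γ * P)‖ := hform ▸ norm_inner_le_norm _ _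
      _ ≤ ‖Q‖ * (G * ‖L P‖) := by gcongr
      _ ≤ G / 2 * (‖L P‖ ^ 2 + ‖Q‖ ^ 2) := by
        nlinarith [mul_nonneg hG0 (sq_nonneg (‖L P‖ - ‖Q‖))]
      _ = _ := by rw [hP, hQ]

theorem bddAbove_range_norm_eval (hγ : Summable fun k => ‖γ k‖) :
    BddAbove (Set.range fun x => ‖eval γ x‖) := by
  refine ⟨‖toContinuousMap γ‖, Set.forall_mem_range.mpr fun x => ?_⟩
  rw [← toContinuousMap_apply_coe hγ]
  exact ContinuousMap.norm_coe_le_norm _ _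

theorem norm_eval_le_linfty (hγ : Summable fun k => ‖γ k‖) (x : ℝ) : ‖eval γ x‖ ≤ linfty γ :=
  le_ciSup (bddAbove_range_norm_eval hγ) x

theorem norm_coeff_le_linfty (hγ : Summable fun k => ‖γ k‖) (k : ℤ) : ‖γ k‖ ≤ linfty γ := by
  have h := (isFormBounded_toeplitz hγ (norm_eval_le_linfty hγ)).bound {k} {0} 1 1
  simp only [Finset.sum_singleton, sub_zero, Pi.one_apply, mul_one, norm_one] at h
  linarith

end Toeplitz

section PositiveFrequencies

variable {c : FC}

/-- The positive-frequency part of `-i ∂ₓ c`. -/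
def posDeriv (c : FC) : FC := fun k => if 0 < k then k * c k else 0

theorem posDeriv_eq (c : FC) (k : ℤ) :
    posDeriv c k = 1 / 2 * (hilbert (D1 c) k - Complex.I * D1 c k) := by
  simp only [posDeriv, hilbert, D1]
  have hI := Complex.I_mul_I
  rcases lt_trichotomy k 0 with hk | rfl | hk
  · rw [if_neg hk.not_gt, Int.sign_eq_neg_one_of_neg hk]
    push_cast
    linear_combination
  · simp
  · rw [if_pos hk, Int.sign_eq_one_of_pos hk]
    push_cast
    linear_combination (k * c k) * hI

theorem abs_sign_le_one (k : ℤ) : |((k.sign : ℤ) : ℝ)| ≤ 1 := by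
  rw [← Int.cast_abs, Int.abs_eq_natAbs, Int.natAbs_sign]
  split_ifs <;> simp

theorem summable_norm_hilbert (hc : Summable fun k => ‖c k‖) :
    Summable fun k => ‖hilbert c k‖ := by
  refine hc.of_nonneg_of_le (fun _ => norm_nonneg _) fun k => ?_
  rw [hilbert, norm_mul, norm_mul, norm_neg, Complex.norm_I, one_mul, Complex.norm_intCast]
  exact mul_le_of_le_one_left (norm_nonneg _) (abs_sign_le_one k)

theorem summable_norm_posDeriv (hc : Summable fun k => ‖D1 c k‖) :
    Summable fun k => ‖posDeriv c k‖ := by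
  refine hc.of_nonneg_of_le (fun _ => norm_nonneg _) fun k => ?_
  unfold posDeriv D1
  split_ifs
  · rw [norm_mul, norm_mul, norm_mul, Complex.norm_I, one_mul]
  · exact norm_zero.trans_le (norm_nonneg _)

theorem summable_eval (hc : Summable fun k => ‖c k‖) (x : ℝ) :
    Summable fun k : ℤ => c k * Complex.exp (Complex.I * k * x) := by
  refine .of_norm (hc.congr fun k => ?_)
  rw [norm_mul, mul_assoc, mul_comm Complex.I, ← Complex.ofReal_intCast, ← Complex.ofReal_mul,
    Complex.norm_exp_ofReal_mul_I, mul_one]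

theorem eval_posDeriv (hc : Summable fun k => ‖D1 c k‖) (x : ℝ) :
    eval (posDeriv c) x = 1 / 2 * (eval (hilbert (D1 c)) x - Complex.I * eval (D1 c) x) := by
  simp only [eval]
  rw [← tsum_mul_left, ← (summable_eval (summable_norm_hilbert hc) x).tsum_sub
    ((summable_eval hc x).mul_left _), ← tsum_mul_left]
  refine tsum_congr fun k => ?_
  rw [posDeriv_eq]
  ring

theorem norm_eval_posDeriv_le (hc : Summable fun k => ‖D1 c k‖) (x : ℝ) :
    ‖eval (posDeriv c) x‖ ≤ (linfty (D1 c) + linfty (hilbert (D1 c))) / 2 := by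
  have hH := norm_eval_le_linfty (summable_norm_hilbert hc) x
  have hD := norm_eval_le_linfty hc x
  have hsub := norm_sub_le (eval (hilbert (D1 c)) x) (Complex.I * eval (D1 c) x)
  rw [norm_mul, Complex.norm_I, one_mul] at hsub
  rw [eval_posDeriv hc, norm_mul, show ‖(1 / 2 : ℂ)‖ = 1 / 2 by norm_num]
  linarith

theorem isFormBounded_posDeriv (hc : Summable fun k => ‖D1 c k‖) :
    IsFormBounded (fun n a => if PosBelow n a then ((n - a : ℤ) : ℂ) * c (n - a) else 0)
      ((linfty (D1 c) + linfty (hilbert (D1 c))) / 2) := by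
  convert (isFormBounded_toeplitz (summable_norm_posDeriv hc)
    (norm_eval_posDeriv_le hc)).indicator_col fun a => 0 < a using 3 with n a
  simp only [posDeriv, PosBelow, sub_pos, ← ite_and]
  rfl

end PositiveFrequencies

/-! ### Summability of the trilinear sum -/

section Summability

variable {s ε : ℝ} {c : FC}

theorem one_le_helmSymbol (ε : ℝ) (k : ℤ) : 1 ≤ helmSymbol ε k :=
  le_add_of_nonneg_right (by positivity)

theorem helmSymbol_neg (ε : ℝ) (k : ℤ) : helmSymbol ε (-k) = helmSymbol ε k := by
  simp [helmSymbol]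

theorem mollSymbol_neg (s ε : ℝ) (k : ℤ) : mollSymbol s ε (-k) = mollSymbol s ε k := by
  simp only [mollSymbol, helmSymbol_neg]

theorem wt_eq_rpow (s : ℝ) (k : ℤ) : wt s k = helmSymbol 1 k ^ s := by simp [wt, helmSymbol]

theorem wt_eq_sq (s : ℝ) (k : ℤ) : wt s k = (helmSymbol 1 k ^ (s / 2)) ^ 2 := by
  rw [wt_eq_rpow, ← Real.rpow_mul_natCast (helmSymbol_pos 1 k).le]
  norm_num

theorem mollSymbol_sq (s ε : ℝ) (k : ℤ) : mollSymbol s ε k ^ 2 = wt s k / helmSymbol ε k ^ 2 := by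
  rw [mollSymbol, div_pow, wt_eq_sq]

theorem mollSymbol_sq_le_wt (s ε : ℝ) (k : ℤ) : mollSymbol s ε k ^ 2 ≤ wt s k := by
  rw [mollSymbol_sq]
  have hwt : 0 ≤ wt s k := (wt_eq_sq s k).symm ▸ sq_nonneg _
  exact div_le_self hwt (one_le_pow₀ (one_le_helmSymbol ε k))

theorem helmSymbol_one_le_mul (hε : ε ≠ 0) (k : ℤ) :
    helmSymbol 1 k ≤ (1 + (ε ^ 2)⁻¹) * helmSymbol ε k := by
  unfold helmSymbol
  have : (1 + (ε ^ 2)⁻¹) * (1 + ε ^ 2 * (k : ℝ) ^ 2) =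
      1 + 1 ^ 2 * (k : ℝ) ^ 2 + ε ^ 2 * (k : ℝ) ^ 2 + (ε ^ 2)⁻¹ := by
    field_simp
    ring
  rw [this, add_assoc]
  exact le_add_of_nonneg_right (by positivity)

theorem helmSymbol_one_add_le (j l : ℤ) :
    helmSymbol 1 (j + l) ≤ 2 * (helmSymbol 1 j * helmSymbol 1 l) := by
  unfold helmSymbol
  push_cast
  nlinarith [sq_nonneg ((j : ℝ) - l), mul_nonneg (sq_nonneg (j : ℝ)) (sq_nonneg (l : ℝ))]

theorem abs_le_rpow_helmSymbol {t : ℝ} (ht : 1 / 2 ≤ t) (k : ℤ) :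
    |(k : ℝ)| ≤ helmSymbol 1 k ^ t :=
  calc |(k : ℝ)| ≤ √(helmSymbol 1 k) := Real.abs_le_sqrt (by simp [helmSymbol])
    _ = helmSymbol 1 k ^ (1 / 2 : ℝ) := Real.sqrt_eq_rpow _
    _ ≤ helmSymbol 1 k ^ t := Real.rpow_le_rpow_of_exponent_le (one_le_helmSymbol 1 k) ht

theorem summable_inv_helmSymbol_one : Summable fun k : ℤ => (helmSymbol 1 k)⁻¹ := by
  have h : Summable fun k : ℤ => 1 / (k : ℝ) ^ 2 := Real.summable_one_div_int_pow.mpr one_lt_two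
  refine (h.add (hasSum_ite_eq 0 (1 : ℝ)).summable).of_nonneg_of_le
    (fun k => (inv_pos.2 (helmSymbol_pos 1 k)).le) fun k => ?_
  rcases eq_or_ne k 0 with rfl | hk
  · simp [helmSymbol]
  · have : (0 : ℝ) < (k : ℝ) ^ 2 := by positivity
    rw [if_neg hk, add_zero, one_div]
    gcongr
    simp [helmSymbol]

/-- The weight `(1 + k²)^t` applied to the moduli of the Fourier coefficients. -/
def weightedNorm (t : ℝ) (c : FC) (k : ℤ) : ℝ := helmSymbol 1 k ^ t * ‖c k‖

theorem weightedNorm_nonneg (t : ℝ) (c : FC) (k : ℤ) : 0 ≤ weightedNorm t c k :=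
  mul_nonneg (Real.rpow_nonneg (helmSymbol_pos 1 k).le t) (norm_nonneg _)

theorem weightedNorm_sq (s : ℝ) (c : FC) (k : ℤ) :
    weightedNorm (s / 2) c k ^ 2 = wt s k * ‖c k‖ ^ 2 := by
  rw [weightedNorm, mul_pow, wt_eq_sq]

theorem memHs.summable_weightedNorm_sq (hc : memHs s c) :
    Summable fun k => weightedNorm (s / 2) c k ^ 2 := by
  simpa only [weightedNorm_sq, memHs] using hc

theorem memHs.summable_weightedNorm (hc : memHs s c) : Summable (weightedNorm ((s - 1) / 2) c) := by
  refine (hc.summable_weightedNorm_sq.add summable_inv_helmSymbol_one).of_nonneg_of_le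
    (weightedNorm_nonneg _ c) fun k => ?_
  have hN := helmSymbol_pos 1 k
  have hsqrt : (helmSymbol 1 k ^ (-(1 / 2) : ℝ)) ^ 2 = (helmSymbol 1 k)⁻¹ := by
    rw [← Real.rpow_mul_natCast hN.le, ← Real.rpow_neg_one]
    norm_num
  have hsplit : weightedNorm ((s - 1) / 2) c k =
      weightedNorm (s / 2) c k * helmSymbol 1 k ^ (-(1 / 2) : ℝ) := by
    rw [weightedNorm, weightedNorm, mul_right_comm, ← Real.rpow_add hN]
    ring_nf
  rw [hsplit, ← hsqrt]
  nlinarith [sq_nonneg (weightedNorm (s / 2) c k - helmSymbol 1 k ^ (-(1 / 2) : ℝ)),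
    sq_nonneg (weightedNorm (s / 2) c k), sq_nonneg (helmSymbol 1 k ^ (-(1 / 2) : ℝ))]

theorem memHs.summable_norm_D1 (hs : 2 ≤ s) (hc : memHs s c) : Summable fun k => ‖D1 c k‖ := by
  refine hc.summable_weightedNorm.of_nonneg_of_le (fun _ => norm_nonneg _) fun k => ?_
  rw [D1, norm_mul, norm_mul, Complex.norm_I, one_mul, Complex.norm_intCast]
  exact mul_le_mul_of_nonneg_right (abs_le_rpow_helmSymbol (by linarith) k) (norm_nonneg _)

theorem mollSymbol_sq_le (hε : ε ≠ 0) (k : ℤ) : mollSymbol s ε k ^ 2 ≤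
    (1 + (ε ^ 2)⁻¹) * (helmSymbol 1 k ^ ((s - 2) / 2) * helmSymbol 1 k ^ (s / 2)) := by
  have hN := helmSymbol_pos 1 k
  have hh := helmSymbol_pos ε k
  have hsplit : helmSymbol 1 k ^ s =
      helmSymbol 1 k ^ ((s - 2) / 2) * helmSymbol 1 k ^ (s / 2) * helmSymbol 1 k := by
    rw [← Real.rpow_add hN, ← Real.rpow_add_one hN.ne']
    ring_nf
  have hratio : helmSymbol 1 k ≤ (1 + (ε ^ 2)⁻¹) * helmSymbol ε k ^ 2 := by
    refine (helmSymbol_one_le_mul hε k).trans ?_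
    gcongr
    exact le_self_pow₀ (one_le_helmSymbol ε k) two_ne_zero
  rw [mollSymbol_sq, wt_eq_rpow, div_le_iff₀ (by positivity), hsplit]
  calc _ ≤ helmSymbol 1 k ^ ((s - 2) / 2) * helmSymbol 1 k ^ (s / 2) *
        ((1 + (ε ^ 2)⁻¹) * helmSymbol ε k ^ 2) := by gcongr
    _ = _ := by ring

theorem mollSymbol_sq_mul_abs_le (hs : 2 ≤ s) (hε : ε ≠ 0) (j l : ℤ) :
    mollSymbol s ε (j + l) ^ 2 * |(l : ℝ)| ≤
      (1 + (ε ^ 2)⁻¹) * 2 ^ ((s - 2) / 2) * (helmSymbol 1 j ^ (s / 2) *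
        helmSymbol 1 l ^ ((s - 1) / 2) * helmSymbol 1 (j + l) ^ (s / 2)) := by
  have hj := helmSymbol_pos 1 j
  have hl := helmSymbol_pos 1 l
  have hjl := helmSymbol_pos 1 (j + l)
  have hpeetre : helmSymbol 1 (j + l) ^ ((s - 2) / 2) ≤
      2 ^ ((s - 2) / 2) * (helmSymbol 1 j ^ (s / 2) * helmSymbol 1 l ^ ((s - 2) / 2)) :=
    calc _ ≤ (2 * (helmSymbol 1 j * helmSymbol 1 l)) ^ ((s - 2) / 2) :=
          Real.rpow_le_rpow hjl.le (helmSymbol_one_add_le j l) (by linarith)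
      _ = 2 ^ ((s - 2) / 2) *
          (helmSymbol 1 j ^ ((s - 2) / 2) * helmSymbol 1 l ^ ((s - 2) / 2)) := by
          rw [Real.mul_rpow two_pos.le (by positivity), Real.mul_rpow hj.le hl.le]
      _ ≤ _ := by
          gcongr
          exacts [one_le_helmSymbol 1 j, by linarith]
  have hsplit : helmSymbol 1 l ^ ((s - 1) / 2) =
      helmSymbol 1 l ^ ((s - 2) / 2) * helmSymbol 1 l ^ (1 / 2 : ℝ) := by
    rw [← Real.rpow_add hl]
    ring_nf
  calc _ ≤ (1 + (ε ^ 2)⁻¹) * (2 ^ ((s - 2) / 2) * (helmSymbol 1 j ^ (s / 2) *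
        helmSymbol 1 l ^ ((s - 2) / 2)) * helmSymbol 1 (j + l) ^ (s / 2)) *
          helmSymbol 1 l ^ (1 / 2 : ℝ) := by
        refine mul_le_mul ((mollSymbol_sq_le hε _).trans ?_) (abs_le_rpow_helmSymbol le_rfl l)
          (abs_nonneg _) (by positivity)
        gcongr
    _ = _ := by
        rw [hsplit]
        ring

theorem summable_mul_mul_add {u v : ℤ → ℝ} (hu : Summable fun k => u k ^ 2) (hv : Summable v)
    (hu0 : ∀ k, 0 ≤ u k) (hv0 : ∀ k, 0 ≤ v k) :
    Summable fun p : ℤ × ℤ => u p.1 * v p.2 * u (p.1 + p.2) := by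
  have hprod : Summable fun p : ℤ × ℤ => u p.1 ^ 2 * v p.2 :=
    hu.mul_of_nonneg hv (fun _ => sq_nonneg _) hv0
  let shear : ℤ × ℤ ≃ ℤ × ℤ :=
    ⟨fun p => (p.1 + p.2, p.2), fun p => (p.1 - p.2, p.2), fun p => by simp, fun p => by simp⟩
  refine (hprod.add (shear.summable_iff.2 hprod)).of_nonneg_of_le
    (fun p => mul_nonneg (mul_nonneg (hu0 _) (hv0 _)) (hu0 _)) fun p => ?_
  simp only [Function.comp_apply, shear, Equiv.coe_fn_mk]
  nlinarith [mul_nonneg (hv0 p.2) (sq_nonneg (u p.1 - u (p.1 + p.2))),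
    mul_nonneg (hv0 p.2) (sq_nonneg (u p.1)), mul_nonneg (hv0 p.2) (sq_nonneg (u (p.1 + p.2)))]

/-- The term of `(T̃_ε((𝓗θ) ∂ₓθ), T̃_ε θ)_{H^s}` with frequency `j` in `𝓗θ` and `l` in `∂ₓθ`. -/
def trilinearTerm (s ε : ℝ) (c : FC) (p : ℤ × ℤ) : ℂ :=
  (mollSymbol s ε (p.1 + p.2) ^ 2 * (p.1.sign * p.2) : ℝ) *
    (c p.1 * c p.2 * starRingEnd ℂ (c (p.1 + p.2)))

theorem summable_trilinearTerm (hs : 2 ≤ s) (hε : ε ≠ 0) (hc : memHs s c) :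
    Summable (trilinearTerm s ε c) := by
  refine ((summable_mul_mul_add hc.summable_weightedNorm_sq hc.summable_weightedNorm
    (weightedNorm_nonneg _ c) (weightedNorm_nonneg _ c)).mul_left
      ((1 + (ε ^ 2)⁻¹) * 2 ^ ((s - 2) / 2))).of_norm_bounded fun p => ?_
  have hmoll := mollSymbol_sq_mul_abs_le hs hε p.1 p.2
  calc ‖trilinearTerm s ε c p‖ = mollSymbol s ε (p.1 + p.2) ^ 2 * |(p.2 : ℝ)| *
        |((p.1.sign : ℤ) : ℝ)| * (‖c p.1‖ * ‖c p.2‖ * ‖c (p.1 + p.2)‖) := by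
        simp only [trilinearTerm, norm_mul, Complex.norm_real, Real.norm_eq_abs, abs_sq,
          RCLike.norm_conj]
        ring
    _ ≤ mollSymbol s ε (p.1 + p.2) ^ 2 * |(p.2 : ℝ)| *
        (‖c p.1‖ * ‖c p.2‖ * ‖c (p.1 + p.2)‖) :=
        mul_le_mul_of_nonneg_right
          (mul_le_of_le_one_right (by positivity) (abs_sign_le_one _)) (by positivity)
    _ ≤ _ := mul_le_mul_of_nonneg_right hmoll (by positivity)
    _ = _ := by
        simp only [weightedNorm]
        ring

theorem hsInner_eq_tsum_trilinearTerm (hs : 2 ≤ s) (hε : ε ≠ 0) (hc : memHs s c) :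
    hsInner s (T ε (mul (hilbert c) (D1 c))) (T ε c) = ∑' p, (trilinearTerm s ε c p).re := by
  let shear : ℤ × ℤ ≃ ℤ × ℤ :=
    ⟨fun p => (p.2, p.1 - p.2), fun p => (p.1 + p.2, p.1), fun p => by simp, fun p => by simp⟩
  have hsum := summable_trilinearTerm hs hε hc
  have hshear : Summable fun q => trilinearTerm s ε c (shear q) := shear.summable_iff.2 hsum
  rw [← Complex.re_tsum hsum, ← shear.tsum_eq, hshear.tsum_prod, hsInner]
  congr 1
  refine tsum_congr fun k => ?_
  simp only [T, mult, mul, shear, Equiv.coe_fn_mk, trilinearTerm, add_sub_cancel, mollSymbol_sq]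
  rw [← tsum_mul_left, ← tsum_mul_right, ← tsum_mul_left]
  refine tsum_congr fun j => ?_
  simp only [map_mul, Complex.conj_ofReal, hilbert, D1, helmSymbol, div_eq_mul_inv, ← inv_pow]
  push_cast
  linear_combination (-(wt s k * ((1 + ε ^ 2 * k ^ 2 : ℂ)⁻¹) ^ 2 * (j.sign * (k - j)) *
    (c j * c (k - j) * starRingEnd ℂ (c k)))) * Complex.I_mul_I

end Summability

/-! ### Reduction to positive frequencies -/

section Symmetrization

variable {f : ℤ × ℤ → ℝ}

theorem summable_ite {ι : Type*} {f : ι → ℝ} (hf : Summable f) (q : ι → Prop) [DecidablePred q] :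
    Summable fun i => if q i then f i else 0 :=
  (hf.indicator {i | q i}).congr fun _ => Set.indicator_apply ..

theorem tsum_eq_two_mul_tsum_pos_fst (hf : Summable f) (hneg : ∀ p, f (-p) = f p)
    (hzero : ∀ l, f (0, l) = 0) : ∑' p, f p = 2 * ∑' p : ℤ × ℤ, if 0 < p.1 then f p else 0 := by
  have hpos := summable_ite hf fun p => 0 < p.1
  have hneg' := summable_ite hf fun p => p.1 < 0
  have hsplit (p : ℤ × ℤ) : f p = (if 0 < p.1 then f p else 0) + if p.1 < 0 then f p else 0 := by
    obtain hp | hp | hp := lt_trichotomy p.1 0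
    · simp [hp, hp.not_gt]
    · have : f p = 0 := by rw [← hzero p.2, ← hp]
      simp [this]
    · simp [hp, hp.not_gt]
  have hreflect : ∑' p : ℤ × ℤ, (if p.1 < 0 then f p else 0) =
      ∑' p : ℤ × ℤ, if 0 < p.1 then f p else 0 := by
    rw [← (Equiv.neg (ℤ × ℤ)).tsum_eq]
    simp [hneg]
  rw [tsum_congr hsplit, hpos.tsum_add hneg', hreflect, two_mul]

/-- The frequencies `(j, l)` of a product with frequency `n = j + l` and right factor `a = l`. -/
def sumRight : ℤ × ℤ ≃ ℤ × ℤ :=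
  ⟨fun p => (p.1 - p.2, p.2), fun p => (p.1 + p.2, p.2), fun p => by simp, fun p => by simp⟩

/-- The frequencies `(j, l)` of a product with left factor `n = j` and frequency `a = j + l`. -/
def leftSum : ℤ × ℤ ≃ ℤ × ℤ :=
  ⟨fun p => (p.1, p.2 - p.1), fun p => (p.1, p.1 + p.2), fun p => by simp, fun p => by simp⟩

/-- The frequencies `(j, l)` of a product with right factor `-n = l` and frequency `-a = j + l`. -/
def negRightNegSum : ℤ × ℤ ≃ ℤ × ℤ :=
  ⟨fun p => (p.1 - p.2, -p.1), fun p => (-p.2, -p.1 - p.2), fun p => by simp,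
    fun p => Prod.ext (by grind) (by simp)⟩

theorem tsum_antidiagonal (f : ℤ × ℤ → ℝ) (q : ℤ → Prop) [DecidablePred q] :
    ∑' p : ℤ × ℤ, (if q p.1 ∧ p.1 + p.2 = 0 then f p else 0) =
      ∑' j, if q j then f (j, -j) else 0 := by
  have hinj : Function.Injective fun j : ℤ => (j, -j) := fun j k h => (Prod.ext_iff.1 h).1
  rw [← hinj.tsum_eq fun p hp => ?_]
  · simp
  · obtain ⟨hq, -⟩ := ite_ne_right_iff.1 hp
    exact ⟨p.1, Prod.ext rfl (neg_eq_of_add_eq_zero_right hq.2)⟩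

theorem ite_pos_fst_eq_add (hright : ∀ j, f (j, 0) = 0) (p : ℤ × ℤ) :
    (if 0 < p.1 then f p else 0) =
      (if PosBelow (sumRight.symm p).1 (sumRight.symm p).2 then f p else 0) +
      (if PosBelow (leftSum.symm p).1 (leftSum.symm p).2 then f p else 0) +
      (if PosBelow (negRightNegSum.symm p).1 (negRightNegSum.symm p).2 then f p else 0) +
      if 0 < p.1 ∧ p.1 + p.2 = 0 then f p else 0 := by
  obtain ⟨j, l⟩ := p
  simp only [sumRight, leftSum, negRightNegSum, Equiv.coe_fn_symm_mk]
  by_cases hl : l = 0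
  · simp [hl, hright, PosBelow]
  · generalize f (j, l) = x
    clear hright
    grind [PosBelow]

theorem tsum_eq_tsum_posBelow_add (hf : Summable f) (hneg : ∀ p, f (-p) = f p)
    (hleft : ∀ l, f (0, l) = 0) (hright : ∀ j, f (j, 0) = 0) :
    ∑' p, f p = 2 * ∑' p : ℤ × ℤ, (if PosBelow p.1 p.2 then
        f (sumRight p) + f (leftSum p) + f (negRightNegSum p) else 0) +
      2 * ∑' j : ℤ, if 0 < j then f (j, -j) else 0 := by
  let restrict (e : ℤ × ℤ ≃ ℤ × ℤ) (p : ℤ × ℤ) : ℝ := if PosBelow p.1 p.2 then f (e p) else 0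
  have hrestrict e : Summable (restrict e) :=
    summable_ite (e.summable_iff.2 hf) fun p => PosBelow p.1 p.2
  have hrestrict' e : Summable fun p => restrict e (e.symm p) :=
    (e.symm.summable_iff (f := restrict e)).2 (hrestrict e)
  have hdiag : Summable fun p : ℤ × ℤ => if 0 < p.1 ∧ p.1 + p.2 = 0 then f p else 0 :=
    summable_ite hf fun p => 0 < p.1 ∧ p.1 + p.2 = 0
  have hsplit (p : ℤ × ℤ) : (if 0 < p.1 then f p else 0) = restrict sumRight (sumRight.symm p) +
      restrict leftSum (leftSum.symm p) + restrict negRightNegSum (negRightNegSum.symm p) +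
        if 0 < p.1 ∧ p.1 + p.2 = 0 then f p else 0 := by
    simp only [restrict, Equiv.apply_symm_apply]
    exact ite_pos_fst_eq_add hright p
  have hadd (p : ℤ × ℤ) : (if PosBelow p.1 p.2 then
      f (sumRight p) + f (leftSum p) + f (negRightNegSum p) else 0) =
        restrict sumRight p + restrict leftSum p + restrict negRightNegSum p := by
    simp only [restrict, ite_add_ite, add_zero]
  rw [tsum_eq_two_mul_tsum_pos_fst hf hneg hleft, tsum_congr hsplit, tsum_congr hadd,
    (((hrestrict' _).add (hrestrict' _)).add (hrestrict' _)).tsum_add hdiag,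
    ((hrestrict' _).add (hrestrict' _)).tsum_add (hrestrict' _),
    (hrestrict' _).tsum_add (hrestrict' _), ((hrestrict _).add (hrestrict _)).tsum_add
    (hrestrict _), (hrestrict _).tsum_add (hrestrict _), tsum_antidiagonal, mul_add]
  simp only [Equiv.tsum_eq]

/-- The exchange of the two low frequencies `a` and `n - a`. -/
def swapLow : ℤ × ℤ ≃ ℤ × ℤ :=
  ⟨fun p => (p.1, p.1 - p.2), fun p => (p.1, p.1 - p.2), fun p => by simp, fun p => by simp⟩

theorem tsum_eq_zero_of_swapLow (h : ∀ p, f (swapLow p) = -f p) : ∑' p, f p = 0 := by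
  have hswap := swapLow.tsum_eq f
  rw [tsum_congr h, tsum_neg] at hswap
  linarith

end Symmetrization

/-! ### The estimate -/

section Estimate

variable {s ε : ℝ} {c : FC} {η : ℝ → ℝ}

theorem hsNorm_sq (s : ℝ) (c : FC) : hsNorm s c ^ 2 = ∑' k, wt s k * ‖c k‖ ^ 2 :=
  Real.sq_sqrt (tsum_nonneg fun k => weightedNorm_sq s c k ▸ sq_nonneg _)

theorem mollSymbol_sq_mul_le (s ε : ℝ) (c : FC) (k : ℤ) :
    mollSymbol s ε k ^ 2 * ‖c k‖ ^ 2 ≤ wt s k * ‖c k‖ ^ 2 :=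
  mul_le_mul_of_nonneg_right (mollSymbol_sq_le_wt s ε k) (sq_nonneg _)

theorem summable_mollSymbol_sq_mul (hc : memHs s c) :
    Summable fun k => mollSymbol s ε k ^ 2 * ‖c k‖ ^ 2 :=
  Summable.of_nonneg_of_le (fun _ => by positivity) (mollSymbol_sq_mul_le s ε c) hc

theorem tsum_mollSymbol_sq_mul_le (hc : memHs s c) :
    ∑' k, mollSymbol s ε k ^ 2 * ‖c k‖ ^ 2 ≤ hsNorm s c ^ 2 :=
  ((summable_mollSymbol_sq_mul hc).tsum_le_tsum (mollSymbol_sq_mul_le s ε c) hc).trans_eq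
    (hsNorm_sq s c).symm

theorem linfty_nonneg (c : FC) : 0 ≤ linfty c := Real.iSup_nonneg fun _ => norm_nonneg _

theorem trilinearTerm_neg (hreal : isReal c) (p : ℤ × ℤ) :
    trilinearTerm s ε c (-p) = starRingEnd ℂ (trilinearTerm s ε c p) := by
  simp only [trilinearTerm, Prod.fst_neg, Prod.snd_neg, ← neg_add, mollSymbol_neg, Int.sign_neg,
    hreal _, map_mul, Complex.conj_ofReal]
  push_cast
  ring

/-- The product of the Fourier coefficients at the frequencies `a`, `n - a` and `-n` of a real
function, which sum to zero, for `p = (n, a)`. -/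
def triad (c : FC) (p : ℤ × ℤ) : ℂ := c p.2 * c (p.1 - p.2) * starRingEnd ℂ (c p.1)

theorem posBelow_swapLow (p : ℤ × ℤ) :
    PosBelow (swapLow p).1 (swapLow p).2 ↔ PosBelow p.1 p.2 := by
  simp only [PosBelow, swapLow, Equiv.coe_fn_mk]
  omega

theorem triad_swapLow (c : FC) (p : ℤ × ℤ) : triad c (swapLow p) = triad c p := by
  simp only [triad, swapLow, Equiv.coe_fn_mk, sub_sub_cancel, mul_comm (c p.2)]

theorem trilinearTerm_sumRight {p : ℤ × ℤ} (hp : PosBelow p.1 p.2) :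
    trilinearTerm s ε c (sumRight p) = (mollSymbol s ε p.1 ^ 2 * p.2 : ℝ) * triad c p := by
  simp only [trilinearTerm, sumRight, Equiv.coe_fn_mk, sub_add_cancel, triad,
    Int.sign_eq_one_of_pos (sub_pos.2 hp.2), Int.cast_one, one_mul, mul_comm (c p.2)]

theorem trilinearTerm_leftSum (hreal : isReal c) {p : ℤ × ℤ} (hp : PosBelow p.1 p.2) :
    trilinearTerm s ε c (leftSum p) =
      (-(mollSymbol s ε p.2 ^ 2 * (p.1 - p.2)) : ℝ) * starRingEnd ℂ (triad c p) := by
  have hdiff : c (p.2 - p.1) = starRingEnd ℂ (c (p.1 - p.2)) := by rw [← hreal, neg_sub]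
  simp only [trilinearTerm, leftSum, Equiv.coe_fn_mk, add_sub_cancel, triad,
    Int.sign_eq_one_of_pos (hp.1.trans hp.2), hdiff, map_mul, Complex.conj_conj]
  push_cast
  ring

theorem trilinearTerm_negRightNegSum (hreal : isReal c) {p : ℤ × ℤ} (hp : PosBelow p.1 p.2) :
    trilinearTerm s ε c (negRightNegSum p) =
      (-(mollSymbol s ε p.2 ^ 2 * p.1) : ℝ) * triad c p := by
  have hsum : p.1 - p.2 + -p.1 = -p.2 := by ring
  simp only [trilinearTerm, negRightNegSum, Equiv.coe_fn_mk, hsum, mollSymbol_neg, triad,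
    Int.sign_eq_one_of_pos (sub_pos.2 hp.2), hreal _, Complex.conj_conj]
  push_cast
  ring

/-- The sum of the three trilinear terms on the triad `(n, a)` with `0 < a < n`, in which the
fraction `a / n` of the top frequency is replaced by `η (a / n)`; so `η = id` gives the sum itself.
-/
def triadTerm (s : ℝ) (η : ℝ → ℝ) (ε : ℝ) (c : FC) (p : ℤ × ℤ) : ℝ :=
  if PosBelow p.1 p.2 then (mollSymbol s ε p.1 ^ 2 * (p.1 * η (p.2 / p.1)) -
    mollSymbol s ε p.2 ^ 2 * (p.1 - p.2) - mollSymbol s ε p.2 ^ 2 * p.1) * (triad c p).re else 0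

theorem triadTerm_id (hreal : isReal c) (p : ℤ × ℤ) : triadTerm s id ε c p =
    if PosBelow p.1 p.2 then (trilinearTerm s ε c (sumRight p)).re +
      (trilinearTerm s ε c (leftSum p)).re +
        (trilinearTerm s ε c (negRightNegSum p)).re else 0 := by
  refine if_ctx_congr Iff.rfl (fun hp => ?_) fun _ => rfl
  have hn : (p.1 : ℝ) ≠ 0 := by exact_mod_cast (hp.1.trans hp.2).ne'
  rw [trilinearTerm_sumRight hp, trilinearTerm_leftSum hreal hp,
    trilinearTerm_negRightNegSum hreal hp, id, mul_div_cancel₀ _ hn]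
  simp only [Complex.re_ofReal_mul, Complex.conj_re]
  ring

theorem summable_re_trilinearTerm (hs : 2 ≤ s) (hε : ε ≠ 0) (hc : memHs s c) :
    Summable fun p => (trilinearTerm s ε c p).re :=
  (Complex.hasSum_re (summable_trilinearTerm hs hε hc).hasSum).summable

theorem summable_triadTerm_id (hs : 2 ≤ s) (hε : ε ≠ 0) (hc : memHs s c) (hreal : isReal c) :
    Summable (triadTerm s id ε c) := by
  have hf := summable_re_trilinearTerm hs hε hc
  have hsum (e : ℤ × ℤ ≃ ℤ × ℤ) : Summable fun p => (trilinearTerm s ε c (e p)).re :=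
    e.summable_iff.2 hf
  exact (summable_ite (((hsum sumRight).add (hsum leftSum)).add (hsum negRightNegSum))
    fun p => PosBelow p.1 p.2).congr fun p => (triadTerm_id hreal p).symm

theorem tsum_re_trilinearTerm (hs : 2 ≤ s) (hε : ε ≠ 0) (hc : memHs s c) (hreal : isReal c) :
    ∑' p, (trilinearTerm s ε c p).re = 2 * ∑' p, triadTerm s id ε c p +
      2 * ∑' j : ℤ, if 0 < j then (trilinearTerm s ε c (j, -j)).re else 0 := by
  rw [tsum_congr (triadTerm_id hreal)]
  exact tsum_eq_tsum_posBelow_add (summable_re_trilinearTerm hs hε hc)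
    (fun p => by rw [trilinearTerm_neg hreal, Complex.conj_re])
    (fun l => by simp [trilinearTerm]) (fun j => by simp [trilinearTerm])

theorem summable_ite_posBelow_mul_triad (hs : 2 ≤ s) (hε : ε ≠ 0) (hc : memHs s c) :
    Summable fun p : ℤ × ℤ =>
      if PosBelow p.1 p.2 then mollSymbol s ε p.1 ^ 2 * p.1 * ‖triad c p‖ else 0 := by
  have hlow : Summable fun p : ℤ × ℤ =>
      if PosBelow p.1 p.2 then mollSymbol s ε p.1 ^ 2 * p.2 * ‖triad c p‖ else 0 := by
    refine (summable_ite (sumRight.summable_iff.2 (summable_trilinearTerm hs hε hc).norm)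
      fun p => PosBelow p.1 p.2).congr fun p => if_ctx_congr Iff.rfl (fun hp => ?_) fun _ => rfl
    have hpos : (0 : ℝ) ≤ p.2 := by exact_mod_cast hp.1.le
    rw [Function.comp_apply, trilinearTerm_sumRight hp, norm_mul, Complex.norm_real,
      Real.norm_of_nonneg (by positivity)]
  refine (hlow.add (swapLow.summable_iff.2 hlow)).congr fun p => ?_
  simp only [Function.comp_apply, posBelow_swapLow, triad_swapLow, ite_add_ite, add_zero]
  refine if_ctx_congr Iff.rfl (fun _ => ?_) fun _ => rfl
  simp only [swapLow, Equiv.coe_fn_mk]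
  push_cast
  ring

theorem summable_triadTerm_sub (hs : 2 ≤ s) (hε : ε ≠ 0) (hc : memHs s c) (hη : Continuous η) :
    Summable fun p => triadTerm s η ε c p - triadTerm s id ε c p := by
  obtain ⟨M, hM⟩ := isCompact_Icc.exists_bound_of_continuousOn
    ((hη.sub continuous_id).continuousOn (s := Set.Icc 0 1))
  refine ((summable_ite_posBelow_mul_triad hs hε hc).mul_left M).of_norm_bounded fun p => ?_
  unfold triadTerm
  split_ifs with hp
  · obtain ⟨ha, han⟩ := hp.cast
    have hn : (0 : ℝ) < p.1 := ha.trans han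
    have hratio : (p.2 / p.1 : ℝ) ∈ Set.Icc 0 1 := ⟨by positivity, (div_le_one hn).2 han.le⟩
    calc _ = ‖mollSymbol s ε p.1 ^ 2 * p.1 * ((η (p.2 / p.1) - p.2 / p.1) * (triad c p).re)‖ := by
          rw [id]
          ring_nf
      _ = mollSymbol s ε p.1 ^ 2 * p.1 * (|η (p.2 / p.1) - p.2 / p.1| * |(triad c p).re|) := by
          rw [norm_mul, Real.norm_of_nonneg (show 0 ≤ mollSymbol s ε p.1 ^ 2 * p.1 by positivity),
            norm_mul, Real.norm_eq_abs, Real.norm_eq_abs]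
      _ ≤ mollSymbol s ε p.1 ^ 2 * p.1 * (M * ‖triad c p‖) := by
          gcongr
          exacts [(norm_nonneg _).trans (hM _ hratio), hM _ hratio, Complex.abs_re_le_norm _]
      _ = _ := by ring
  · simp

theorem triadTerm_sub_swapLow (hη : ∀ x, η x + η (1 - x) = 1) (p : ℤ × ℤ) :
    triadTerm s η ε c (swapLow p) - triadTerm s id ε c (swapLow p) =
      -(triadTerm s η ε c p - triadTerm s id ε c p) := by
  simp only [triadTerm, posBelow_swapLow]
  split_ifs with hp
  · have hn : (p.1 : ℝ) ≠ 0 := by exact_mod_cast (hp.1.trans hp.2).ne'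
    have hratio : ((p.1 - p.2 : ℤ) / p.1 : ℝ) = 1 - p.2 / p.1 := by
      push_cast
      field_simp
    rw [triad_swapLow]
    simp only [swapLow, Equiv.coe_fn_mk, hratio, id]
    linear_combination (mollSymbol s ε p.1 ^ 2 * p.1 * (triad c p).re) * hη (p.2 / p.1)
  · simp

theorem hasSum_triadTerm (hs : 2 ≤ s) (hε : ε ≠ 0) (hc : memHs s c) (hreal : isReal c)
    (hη : Continuous η) (hη' : ∀ x, η x + η (1 - x) = 1) :
    HasSum (triadTerm s η ε c) (∑' p, triadTerm s id ε c p) := by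
  have hdiff := (summable_triadTerm_sub hs hε hc hη).hasSum
  rw [tsum_eq_zero_of_swapLow (triadTerm_sub_swapLow hη')] at hdiff
  simpa using (summable_triadTerm_id hs hε hc hreal).hasSum.add hdiff

theorem triadTerm_eq_re_symmKernel_mul (p : ℤ × ℤ) : triadTerm s η ε c p =
    ((symmKernel s η ε p.1 p.2 *
      (if PosBelow p.1 p.2 then ((p.1 - p.2 : ℤ) : ℂ) * c (p.1 - p.2) else 0)) *
      (mollSymbol s ε p.2 * c p.2) * (mollSymbol s ε p.1 * starRingEnd ℂ (c p.1))).re := by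
  unfold triadTerm
  split_ifs with hp
  · have hsub : (p.1 - p.2 : ℝ) ≠ 0 := (sub_pos.2 hp.cast.2).ne'
    have hVn := (mollSymbol_pos s ε p.1).ne'
    have hVa := (mollSymbol_pos s ε p.2).ne'
    rw [← Complex.re_ofReal_mul, triad]
    congr 1
    have hkernel : mollSymbol s ε p.1 ^ 2 * (p.1 * η (p.2 / p.1)) -
        mollSymbol s ε p.2 ^ 2 * (p.1 - p.2) - mollSymbol s ε p.2 ^ 2 * p.1 =
        symmKernel s η ε p.1 p.2 *
          ((p.1 - p.2 : ℤ) * (mollSymbol s ε p.1 * mollSymbol s ε p.2)) := by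
      rw [symmKernel, Int.cast_sub, div_mul_cancel₀ _ (by positivity)]
    rw [hkernel]
    push_cast
    ring
  · simp

theorem exists_abs_tsum_triadTerm_id_le (hs : 2 ≤ s) : ∃ C, 0 ≤ C ∧ ∀ ε, ε ≠ 0 → ∀ c : FC,
    memHs s c → isReal c → |∑' p, triadTerm s id ε c p| ≤
      C * (linfty (D1 c) + linfty (hilbert (D1 c))) * hsNorm s c ^ 2 := by
  obtain ⟨η, hη, hη', C, hC⟩ := exists_isUniformSchurMultiplierOn_symmKernel hs
  refine ⟨|C|, abs_nonneg C, fun ε hε c hc hreal => ?_⟩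
  have hB := hC ε _ _ (fun n a h => if_neg h) (isFormBounded_posDeriv (hc.summable_norm_D1 hs))
  have hkernel : triadTerm s η ε c = _ := funext triadTerm_eq_re_symmKernel_mul
  have hsum := hasSum_triadTerm hs hε hc hreal hη hη'
  rw [hkernel] at hsum
  have hf : HasSum (fun k => ‖(mollSymbol s ε k : ℂ) * c k‖ ^ 2)
      (∑' k, mollSymbol s ε k ^ 2 * ‖c k‖ ^ 2) := by
    simpa [mul_pow] using (summable_mollSymbol_sq_mul hc).hasSum
  have hh : HasSum (fun k => ‖(mollSymbol s ε k : ℂ) * starRingEnd ℂ (c k)‖ ^ 2)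
      (∑' k, mollSymbol s ε k ^ 2 * ‖c k‖ ^ 2) := by
    simpa [mul_pow] using (summable_mollSymbol_sq_mul hc).hasSum
  have hA : 0 ≤ linfty (D1 c) + linfty (hilbert (D1 c)) :=
    add_nonneg (linfty_nonneg _) (linfty_nonneg _)
  have hnonneg : 0 ≤ C * ((linfty (D1 c) + linfty (hilbert (D1 c))) / 2) := hB.nonneg
  have hle := hB.abs_le_of_hasSum (f := fun k => mollSymbol s ε k * c k)
    (h := fun k => mollSymbol s ε k * starRingEnd ℂ (c k)) hsum hf hh
  calc _ ≤ C * ((linfty (D1 c) + linfty (hilbert (D1 c))) / 2) *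
        ∑' k, mollSymbol s ε k ^ 2 * ‖c k‖ ^ 2 := hle.trans_eq (by ring)
    _ ≤ |C| * (linfty (D1 c) + linfty (hilbert (D1 c))) * hsNorm s c ^ 2 := by
        refine mul_le_mul ?_ (tsum_mollSymbol_sq_mul_le hc)
          (tsum_nonneg fun _ => by positivity) (by positivity)
        nlinarith [le_abs_self C, abs_nonneg C]

theorem norm_zero_le_hsNorm (hc : memHs s c) : ‖c 0‖ ≤ hsNorm s c := by
  refine (le_abs_self _).trans (Real.abs_le_sqrt ?_)
  refine le_trans (by simp [wt]) (hc.le_tsum 0 fun k _ => ?_)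
  exact weightedNorm_sq s c k ▸ sq_nonneg _

theorem norm_trilinearTerm_antidiagonal_le (hs : 2 ≤ s) (hc : memHs s c) (j : ℤ) :
    ‖trilinearTerm s ε c (j, -j)‖ ≤ linfty (D1 c) / 2 *
      (wt s j * ‖c j‖ ^ 2 + (helmSymbol 1 j)⁻¹ * hsNorm s c ^ 2) := by
  have hD := norm_coeff_le_linfty (hc.summable_norm_D1 hs) (-j)
  have hN := helmSymbol_pos 1 j
  have hwt : helmSymbol 1 j ≤ wt s j := by
    rw [wt_eq_rpow]
    exact Real.self_le_rpow_of_one_le (one_le_helmSymbol 1 j) (by linarith)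
  have hterm : ‖trilinearTerm s ε c (j, -j)‖ = |((j.sign : ℤ) : ℝ)| *
      (‖D1 c (-j)‖ * (‖c j‖ * ‖c 0‖)) := by
    simp [trilinearTerm, D1, mollSymbol, helmSymbol]
    ring
  have hyoung : ‖c j‖ * ‖c 0‖ ≤
      (helmSymbol 1 j * ‖c j‖ ^ 2 + (helmSymbol 1 j)⁻¹ * ‖c 0‖ ^ 2) / 2 := by
    linarith [two_mul_le_add_mul_sq (a := ‖c j‖) (b := ‖c 0‖) hN]
  calc _ ≤ linfty (D1 c) *
        ((helmSymbol 1 j * ‖c j‖ ^ 2 + (helmSymbol 1 j)⁻¹ * ‖c 0‖ ^ 2) / 2) := by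
        rw [hterm]
        refine (mul_le_of_le_one_left (by positivity) (abs_sign_le_one j)).trans ?_
        exact mul_le_mul hD hyoung (by positivity) (linfty_nonneg _)
    _ ≤ linfty (D1 c) * ((wt s j * ‖c j‖ ^ 2 + (helmSymbol 1 j)⁻¹ * hsNorm s c ^ 2) / 2) := by
        have := linfty_nonneg (D1 c)
        gcongr
        exact norm_zero_le_hsNorm hc
    _ = _ := by ring

theorem abs_tsum_antidiagonal_le (hs : 2 ≤ s) (hc : memHs s c) :
    |∑' j : ℤ, if 0 < j then (trilinearTerm s ε c (j, -j)).re else 0| ≤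
      linfty (D1 c) / 2 * (hsNorm s c ^ 2 + (∑' k, (helmSymbol 1 k)⁻¹) * hsNorm s c ^ 2) := by
  have hnorm : HasSum (fun k => wt s k * ‖c k‖ ^ 2) (hsNorm s c ^ 2) :=
    hsNorm_sq s c ▸ Summable.hasSum hc
  have hsum := (hnorm.add
    (summable_inv_helmSymbol_one.hasSum.mul_right (hsNorm s c ^ 2))).mul_left (linfty (D1 c) / 2)
  rw [← Real.norm_eq_abs]
  refine tsum_of_norm_bounded hsum fun j => ?_
  have hle := norm_trilinearTerm_antidiagonal_le (ε := ε) hs hc j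
  split_ifs
  · exact (Complex.abs_re_le_norm _).trans hle
  · exact (norm_zero (E := ℝ)).trans_le ((norm_nonneg _).trans hle)

end Estimate

end FC

theorem statement15_general (s : ℝ) (hs : 2 ≤ s) :
    ∃ C > 0, ∀ ε, ε ≠ 0 → ∀ θ : FC, FC.memHs s θ → FC.isReal θ →
      |FC.hsInner s (FC.T ε (FC.mul (FC.hilbert θ) (FC.D1 θ))) (FC.T ε θ)| ≤
        C * (FC.linfty (FC.D1 θ) + FC.linfty (FC.hilbert (FC.D1 θ))) * FC.hsNorm s θ ^ 2 := by
  obtain ⟨C, hC, hmain⟩ := FC.exists_abs_tsum_triadTerm_id_le hs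
  set κ := ∑' k, (FC.helmSymbol 1 k)⁻¹
  have hκ : 0 ≤ κ := tsum_nonneg fun k => (inv_pos.2 (FC.helmSymbol_pos 1 k)).le
  refine ⟨2 * C + (1 + κ), by positivity, fun ε hε θ hθ hreal => ?_⟩
  have hA' := FC.linfty_nonneg (FC.hilbert (FC.D1 θ))
  have hdiag := FC.abs_tsum_antidiagonal_le (ε := ε) hs hθ
  rw [FC.hsInner_eq_tsum_trilinearTerm hs hε hθ, FC.tsum_re_trilinearTerm hs hε hθ hreal]
  refine (abs_add_le _ _).trans ?_
  rw [abs_mul, abs_mul, abs_two]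
  have hslack : 0 ≤ (1 + κ) * FC.linfty (FC.hilbert (FC.D1 θ)) * FC.hsNorm s θ ^ 2 := by
    positivity
  linarith [hmain ε hε θ hθ hreal]

/-- Let `s > 7/2`.  There is `C = C(s) > 0` such that for all `ε ∈ (0,1)`
and `θ ∈ H^s(𝕋)`:
`|(T̃_ε((𝓗θ) ∂ₓθ), T̃_ε θ)_{H^s}| ≤ C (‖∂ₓθ‖_{L^∞} + ‖𝓗∂ₓθ‖_{L^∞}) ‖θ‖²_{H^s}`. -/
theorem statement15 (s : ℝ) (hs : 7 / 2 < s) :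
    ∃ C > (0 : ℝ), ∀ ε : ℝ, ε ∈ Set.Ioo (0 : ℝ) 1 → ∀ θ : FC,
      FC.memHs s θ → FC.isReal θ →
      |FC.hsInner s (FC.T ε (FC.mul (FC.hilbert θ) (FC.D1 θ))) (FC.T ε θ)|
        ≤ C * (FC.linfty (FC.D1 θ) + FC.linfty (FC.hilbert (FC.D1 θ)))
            * FC.hsNorm s θ ^ 2 := by
  obtain ⟨C, hC, h⟩ := statement15_general s (by linarith)
  exact ⟨C, hC, fun ε hε => h ε hε.1.ne'⟩
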